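/- arXiv:2104.05907 — 4 statements merged into one kernel-verified Lean document; each statement's English description precedes it below -/
import Mathlib

section
/- For every positive integer k, the k-th Burling graph contains no induced wheel (i.e., no induced subgraph of the k-th Burling graph is a wheel). -/
universe u

/-- A *wheel* is a graph consisting of an induced cycle of length at least 4 together with a
single additional vertex (the hub) having at least 3 neighbours on the cycle. -/
def IsWheel {V : Type u} (G : SimpleGraph V) : Prop :=
  ∃ (w : V) (n : ℕ), 4 ≤ n ∧
    Nonempty (G.induce {u | u ≠ w} ≃g SimpleGraph.cycleGraph n) ∧
    3 ≤ (G.neighborSet w).ncard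

/-- A graph is a *fan with pivot `f`* if deleting `f` leaves an induced path and `f` has at
least 3 neighbours (necessarily on that path). -/
def IsFanWithPivot {V : Type u} (G : SimpleGraph V) (f : V) : Prop :=
  (∃ n : ℕ, Nonempty (G.induce {u | u ≠ f} ≃g SimpleGraph.pathGraph n)) ∧
    3 ≤ (G.neighborSet f).ncard

/-- A *fan* is a graph consisting of an induced path and a single additional vertex (the pivot)
with at least 3 neighbours on the path. -/
def IsFan {V : Type u} (G : SimpleGraph V) : Prop :=
  ∃ f : V, IsFanWithPivot G f

/-- A *guarded fan* is a graft `(F, M)` such that `F` is a fan with pivot `f` and both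
endpoints of the path `F \ {f}` lie in `M`. -/
def IsGuardedFan {V : Type u} (G : SimpleGraph V) (M : Set V) : Prop :=
  ∃ (f : V) (n : ℕ) (e : G.induce {u | u ≠ f} ≃g SimpleGraph.pathGraph (n + 1)),
    3 ≤ (G.neighborSet f).ncard ∧
    ((e.symm 0 : {u // u ≠ f}) : V) ∈ M ∧ ((e.symm (Fin.last n) : {u // u ≠ f}) : V) ∈ M

/-- A *mountable path* is a graft `(P, M)` such that `P` is a path and `|M| ≥ 3`. -/
def IsMountablePath {V : Type u} (G : SimpleGraph V) (M : Set V) : Prop :=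
  (∃ n : ℕ, Nonempty (G ≃g SimpleGraph.pathGraph n)) ∧ 3 ≤ M.ncard

/-- A *theta* is a graph consisting of three internally vertex-disjoint paths of length at
least 2 with common endpoints, such that every edge lies on one of the three paths. -/
def IsTheta {V : Type u} (G : SimpleGraph V) : Prop :=
  ∃ (a b : V) (p₁ p₂ p₃ : G.Walk a b),
    a ≠ b ∧ p₁.IsPath ∧ p₂.IsPath ∧ p₃.IsPath ∧
    2 ≤ p₁.length ∧ 2 ≤ p₂.length ∧ 2 ≤ p₃.length ∧
    (∀ v, v ∈ p₁.support → v ∈ p₂.support → v = a ∨ v = b) ∧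
    (∀ v, v ∈ p₁.support → v ∈ p₃.support → v = a ∨ v = b) ∧
    (∀ v, v ∈ p₂.support → v ∈ p₃.support → v = a ∨ v = b) ∧
    (∀ v : V, v ∈ p₁.support ∨ v ∈ p₂.support ∨ v ∈ p₃.support) ∧
    (∀ e ∈ G.edgeSet, e ∈ p₁.edges ∨ e ∈ p₂.edges ∨ e ∈ p₃.edges)

/-- A graft `(G, T)` is *clean* if (1) `G` is triangle-free, (2) `T` is a stable set,
(3) `G` contains no induced wheel, (4) `(G,T)` contains no induced guarded fan, and
(5) `(G,T)` contains no induced mountable path. -/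
def IsCleanGraft {V : Type u} (G : SimpleGraph V) (T : Set V) : Prop :=
  G.CliqueFree 3 ∧
  (∀ u ∈ T, ∀ v ∈ T, ¬ G.Adj u v) ∧
  (∀ s : Set V, ¬ IsWheel (G.induce s)) ∧
  (∀ s : Set V, ¬ IsGuardedFan (G.induce s) (Subtype.val ⁻¹' T)) ∧
  (∀ s : Set V, ¬ IsMountablePath (G.induce s) (Subtype.val ⁻¹' T))

/-- The graph of `pendent((G,T),t)`: a new vertex (`none`) is added whose only
neighbour is `t`. -/
def pendentGraph {V : Type u} (G : SimpleGraph V) (t : V) : SimpleGraph (Option V) :=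
  SimpleGraph.fromRel (fun a b =>
    (∃ u v : V, a = some u ∧ b = some v ∧ G.Adj u v) ∨ (a = none ∧ b = some t))

/-- The distinguished set of `pendent((G,T),t)`: `T' = (T ∪ {t'}) \ {t}`. -/
def pendentT {V : Type u} (T : Set V) (t : V) : Set (Option V) :=
  insert none (some '' (T \ {t}))

/-- The graph of `clone((G,T),t)`: a new vertex (`none`) is added whose neighbourhood is
exactly the neighbourhood of `t` in `G`. -/
def cloneGraph {V : Type u} (G : SimpleGraph V) (t : V) : SimpleGraph (Option V) :=
  SimpleGraph.fromRel (fun a b =>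
    (∃ u v : V, a = some u ∧ b = some v ∧ G.Adj u v) ∨
    (∃ v : V, a = none ∧ b = some v ∧ G.Adj t v))

/-- The distinguished set of `clone((G,T),t)`: `T' = T ∪ {t'}`. -/
def cloneT {V : Type u} (T : Set V) : Set (Option V) :=
  insert none (some '' T)

/-- The graph of `join((G₁,T₁), X, (G₂,T₂))`, where the bijection `φ : X ≃ T₂` prescribes
which vertex of `T₂` is identified with which vertex of `X`. -/
def joinGraph {V₁ V₂ : Type u} (G₁ : SimpleGraph V₁) (G₂ : SimpleGraph V₂)
    (X : Set V₁) (T₂ : Set V₂) (φ : X ≃ T₂) :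
    SimpleGraph (V₁ ⊕ {v : V₂ // v ∉ T₂}) :=
  SimpleGraph.fromRel (fun a b =>
    (∃ u v : V₁, a = Sum.inl u ∧ b = Sum.inl v ∧ G₁.Adj u v) ∨
    (∃ u v : {v : V₂ // v ∉ T₂}, a = Sum.inr u ∧ b = Sum.inr v ∧ G₂.Adj ↑u ↑v) ∨
    (∃ (x : X) (w : {v : V₂ // v ∉ T₂}), a = Sum.inl ↑x ∧ b = Sum.inr w ∧ G₂.Adj ↑(φ x) ↑w) ∨
    (∃ x y : X, a = Sum.inl ↑x ∧ b = Sum.inl ↑y ∧ G₂.Adj ↑(φ x) ↑(φ y)))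

/-- The distinguished set of `join((G₁,T₁), X, (G₂,T₂))` is `T₁`. -/
def joinT {V₁ V₂ : Type u} (T₁ : Set V₁) (T₂ : Set V₂) : Set (V₁ ⊕ {v : V₂ // v ∉ T₂}) :=
  Sum.inl '' T₁

/-- A *graph–stable-set pair*: a graph together with a set of (stable) sets of vertices. -/
structure GSPair : Type 1 where
  V : Type
  G : SimpleGraph V
  S : Set (Set V)

/-- The `NEXT` procedure of the Burling construction.  The new vertex type consists of the
original vertices, the vertices `(S, u)` of the copy `H_S` for each `S ∈ 𝒮`, and the new
vertices `v_{S,T}` for `S ∈ 𝒮` and `T ∈ 𝒮(H_S)`. -/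
def NEXT (P : GSPair) : GSPair where
  V := P.V ⊕ ((↥P.S × P.V) ⊕ (↥P.S × ↥P.S))
  G := SimpleGraph.fromRel (fun a b =>
    (∃ u v : P.V, a = Sum.inl u ∧ b = Sum.inl v ∧ P.G.Adj u v) ∨
    (∃ (S : ↥P.S) (u v : P.V),
      a = Sum.inr (Sum.inl (S, u)) ∧ b = Sum.inr (Sum.inl (S, v)) ∧ P.G.Adj u v) ∨
    (∃ (S T : ↥P.S) (u : P.V),
      a = Sum.inr (Sum.inr (S, T)) ∧ b = Sum.inr (Sum.inl (S, u)) ∧ u ∈ (T : Set P.V)))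
  S := { A | ∃ S T : ↥P.S,
      A = Sum.inl '' (S : Set P.V) ∪ (fun u => Sum.inr (Sum.inl (S, u))) '' (T : Set P.V) ∨
      A = insert (Sum.inr (Sum.inr (S, T))) (Sum.inl '' (S : Set P.V)) }

/-- `BurlingPair k` is the graph–stable-set pair `(G'_{k+1}, 𝒮_{k+1})`; in particular
`BurlingPair 0 = (K₁, {V(K₁)})` and `(BurlingPair (k-1)).G` is the `k`-th Burling graph. -/
def BurlingPair : ℕ → GSPair
  | 0 => ⟨Unit, ⊥, {Set.univ}⟩
  | (k + 1) => NEXT (BurlingPair k)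

/-- A *graft*: a graph together with a distinguished set of vertices. -/
structure GraftData : Type 1 where
  V : Type
  G : SimpleGraph V
  T : Set V

/-- The step `(G_k, T_k) ↦ (G_{k+1}, T_{k+1})` of the graft construction of Burling graphs,
with all the pendent, clone and join operations of the construction performed at once.

Vertices: `inl x` for `x ∈ V(G_k)`; `inr (inl ⟨u, w⟩)` for `u ∈ T_k` and
`w : ↥T_k ⊕ ↥T_k` with `w ≠ inl u`, the `2|T_k| - 1` clones of `u` (so that
`X_u = {u} ∪ {⟨u, w⟩}` has been identified with `S'_u ≃ T_k ⊕ T_k`, the vertex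
indexed by `inl v` being the copy of `v` in `S_u` and the vertex indexed by `inr v`
being the pendant `t_{u,v}`); and `inr (inr (u, y))` for the vertices of the copy
`H'_u` not in `S'_u`, namely `y = inl x` for a copy of `x ∈ V(G_k) \ T_k` and
`y = inr v` for the clone `v_u` of `v ∈ T_k`. -/
def nextGraft (P : GraftData) : GraftData where
  V := P.V ⊕ ((Σ u : ↥P.T, {w : ↥P.T ⊕ ↥P.T // w ≠ Sum.inl u}) ⊕
        (↥P.T × ({v : P.V // v ∉ P.T} ⊕ ↥P.T)))
  G := SimpleGraph.fromRel (fun a b =>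
    -- edges of `G_k`
    (∃ x y : P.V, a = Sum.inl x ∧ b = Sum.inl y ∧ P.G.Adj x y) ∨
    -- each clone of `u` is adjacent to `N_{G_k}(u)`
    (∃ (x : P.V) (u : ↥P.T) (w : {w : ↥P.T ⊕ ↥P.T // w ≠ Sum.inl u}),
      a = Sum.inl x ∧ b = Sum.inr (Sum.inl ⟨u, w⟩) ∧ P.G.Adj ↑u x) ∨
    -- `u` (identified with the copy of `u` in `S_u`) is adjacent to the copies of `N_{G_k}(u)`
    (∃ (u : ↥P.T) (x : {v : P.V // v ∉ P.T}),
      a = Sum.inl ↑u ∧ b = Sum.inr (Sum.inr (u, Sum.inl x)) ∧ P.G.Adj ↑u ↑x) ∨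
    -- the clone of `u` identified with the copy of `v ∈ S_u` is adjacent to copies of `N(v)`
    (∃ (u : ↥P.T) (w : {w : ↥P.T ⊕ ↥P.T // w ≠ Sum.inl u}) (v : ↥P.T)
        (x : {v : P.V // v ∉ P.T}),
      a = Sum.inr (Sum.inl ⟨u, w⟩) ∧ b = Sum.inr (Sum.inr (u, Sum.inl x)) ∧
        (w : ↥P.T ⊕ ↥P.T) = Sum.inl v ∧ P.G.Adj ↑v ↑x) ∨
    -- the clone of `u` identified with the pendant `t_{u,v}` is adjacent to the clone `v_u`
    (∃ (u : ↥P.T) (w : {w : ↥P.T ⊕ ↥P.T // w ≠ Sum.inl u}) (v : ↥P.T),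
      a = Sum.inr (Sum.inl ⟨u, w⟩) ∧ b = Sum.inr (Sum.inr (u, Sum.inr v)) ∧
        (w : ↥P.T ⊕ ↥P.T) = Sum.inr v) ∨
    -- edges of `G_k` inside the copy `H'_u`
    (∃ (u : ↥P.T) (x y : {v : P.V // v ∉ P.T}),
      a = Sum.inr (Sum.inr (u, Sum.inl x)) ∧ b = Sum.inr (Sum.inr (u, Sum.inl y)) ∧
        P.G.Adj ↑x ↑y) ∨
    -- the clone `v_u` is adjacent to the copies of `N_{G_k}(v)`
    (∃ (u : ↥P.T) (x : {v : P.V // v ∉ P.T}) (v : ↥P.T),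
      a = Sum.inr (Sum.inr (u, Sum.inl x)) ∧ b = Sum.inr (Sum.inr (u, Sum.inr v)) ∧
        P.G.Adj ↑v ↑x))
  T := { a | (∃ u ∈ P.T, a = Sum.inl u) ∨
      (∃ c : (Σ u : ↥P.T, {w : ↥P.T ⊕ ↥P.T // w ≠ Sum.inl u}), a = Sum.inr (Sum.inl c)) }

/-- `BurlingGraft k` is the graft `(G_{k+1}, T_{k+1})`; in particular
`BurlingGraft 0 = (K₂, {t})`. -/
def BurlingGraft : ℕ → GraftData
  | 0 => ⟨Bool, ⊤, {true}⟩
  | (k + 1) => nextGraft (BurlingGraft k)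

/-- The graph `G*` obtained from a graph–stable-set pair by adding, for each `S ∈ 𝒮`,
a new vertex `v_S` whose neighbourhood is exactly `S`. -/
def GStar (P : GSPair) : SimpleGraph (P.V ⊕ ↥P.S) :=
  SimpleGraph.fromRel (fun a b =>
    (∃ u v : P.V, a = Sum.inl u ∧ b = Sum.inl v ∧ P.G.Adj u v) ∨
    (∃ (S : ↥P.S) (u : P.V), a = Sum.inr S ∧ b = Sum.inl u ∧ u ∈ (S : Set P.V)))

/-- The grafts obtainable from the graft `(K₂, {t})` by a finite sequence of pendent,
clone and join operations. -/
inductive Obtainable : GraftData → Prop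
  | base : Obtainable ⟨Bool, ⊤, {true}⟩
  | pendent (P : GraftData) (hP : Obtainable P) (t : P.V) (ht : t ∈ P.T) :
      Obtainable ⟨Option P.V, pendentGraph P.G t, pendentT P.T t⟩
  | clone (P : GraftData) (hP : Obtainable P) (t : P.V) (ht : t ∈ P.T) :
      Obtainable ⟨Option P.V, cloneGraph P.G t, cloneT P.T⟩
  | join (P Q : GraftData) (hP : Obtainable P) (hQ : Obtainable Q)
      (X : Set P.V) (hX : X ⊆ P.T)
      (hnb : ∀ x ∈ X, ∀ y ∈ X, P.G.neighborSet x = P.G.neighborSet y)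
      (φ : X ≃ ↥Q.T) :
      Obtainable ⟨P.V ⊕ {v : Q.V // v ∉ Q.T}, joinGraph P.G Q.G X Q.T φ, Sum.inl '' P.T⟩

namespace BW

variable {W : Type*} {W₀ : Type*}

def IP (H : SimpleGraph W) (p : ℕ → W) (n : ℕ) : Prop :=
  ∀ i j, i ≤ n → j ≤ n → ((H.Adj (p i) (p j) ↔ (i + 1 = j ∨ j + 1 = i)) ∧ (p i = p j → i = j))

def IC (H : SimpleGraph W) (c : ℤ → W) (m : ℤ) : Prop :=
  4 ≤ m ∧ ∀ i j, ((H.Adj (c i) (c j) ↔ (m ∣ i - j - 1 ∨ m ∣ i - j + 1)) ∧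
    (c i = c j ↔ m ∣ i - j))

structure CleanOn (H : SimpleGraph W) (U T : Set W) : Prop where
  tri : ∀ a ∈ U, ∀ b ∈ U, ∀ c ∈ U, H.Adj a b → H.Adj b c → H.Adj a c → False
  stab : ∀ a ∈ U, ∀ b ∈ U, a ∈ T → b ∈ T → H.Adj a b → False
  mount : ∀ p n j, IP H p n → (∀ i, i ≤ n → p i ∈ U) → p 0 ∈ T → p n ∈ T → 0 < j → j < n →
    p j ∈ T → False
  fan : ∀ p n w i j k, IP H p n → (∀ i, i ≤ n → p i ∈ U) → p 0 ∈ T → p n ∈ T → w ∈ U →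
    (∀ i, i ≤ n → w ≠ p i) → i < j → j < k → k ≤ n → H.Adj w (p i) → H.Adj w (p j) →
    H.Adj w (p k) → False
  wheel : ∀ c m w i j k, IC H c m → (∀ i, c i ∈ U) → w ∈ U → (∀ i, w ≠ c i) →
    c i ≠ c j → c j ≠ c k → c i ≠ c k → H.Adj w (c i) → H.Adj w (c j) → H.Adj w (c k) → False

theorem IP.sub {H : SimpleGraph W} {p : ℕ → W} {n : ℕ} (h : IP H p n) (l r : ℕ) (hr : r ≤ n) :
    IP H (fun i => p (l + i)) (r - l) ∨ r < l := by
  by_cases hl : r < l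
  · exact Or.inr hl
  left
  intro i j hi hj
  have := h (l + i) (l + j) (by omega) (by omega)
  refine ⟨this.1.trans (by omega), fun e => ?_⟩
  have := this.2 e
  omega

theorem IP.rev {H : SimpleGraph W} {p : ℕ → W} {n : ℕ} (h : IP H p n) :
    IP H (fun i => p (n - i)) n := by
  intro i j hi hj
  have := h (n - i) (n - j) (by omega) (by omega)
  refine ⟨this.1.trans (by omega), fun e => ?_⟩
  have := this.2 e
  omega

theorem sort3 (P : ℕ → Prop) (i j k : ℕ) (hij : i ≠ j) (hjk : j ≠ k) (hik : i ≠ k)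
    (hi : P i) (hj : P j) (hk : P k) : ∃ a b c, a < b ∧ b < c ∧ P a ∧ P b ∧ P c := by
  rcases lt_or_gt_of_ne hij with h1 | h1 <;> rcases lt_or_gt_of_ne hjk with h2 | h2 <;>
    rcases lt_or_gt_of_ne hik with h3 | h3
  · exact ⟨i, j, k, h1, h2, hi, hj, hk⟩
  · omega
  · exact ⟨i, k, j, h3, h2, hi, hk, hj⟩
  · exact ⟨k, i, j, h3, h1, hk, hi, hj⟩
  · exact ⟨j, i, k, h1, h3, hj, hi, hk⟩
  · exact ⟨j, k, i, h2, h3, hj, hk, hi⟩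
  · omega
  · exact ⟨k, j, i, h2, h1, hk, hj, hi⟩

theorem CleanOn.mount3 {H : SimpleGraph W} {U T : Set W} (h : CleanOn H U T) {p : ℕ → W} {n : ℕ}
    (hp : IP H p n) (hU : ∀ i, i ≤ n → p i ∈ U) {i j k : ℕ} (hij : i < j) (hjk : j < k)
    (hk : k ≤ n) (h1 : p i ∈ T) (h2 : p j ∈ T) (h3 : p k ∈ T) : False := by
  rcases hp.sub i k hk with hs | hs
  · refine h.mount _ _ (j - i) hs (fun t ht => hU _ (by omega)) (by simpa using h1) ?_ (by omega)
      (by omega) ?_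
    · have : i + (k - i) = k := by omega
      simpa [this] using h3
    · have : i + (j - i) = j := by omega
      simpa [this] using h2
  · omega

theorem dvd_small {m x : ℤ} (h : m ∣ x) (h1 : -m < x) (h2 : x < m) : x = 0 := by
  apply Int.eq_zero_of_abs_lt_dvd h
  rw [abs_lt]; exact ⟨h1, h2⟩

/-- window of a cycle -/
theorem IC.window {H : SimpleGraph W} {c : ℤ → W} {m : ℤ} (h : IC H c m) (r : ℤ) :
    IP H (fun i => c (r + i)) (m - 2).toNat := by
  obtain ⟨h4, h⟩ := h
  intro i j hi hj
  have hh := h (r + i) (r + j)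
  refine ⟨hh.1.trans ⟨?_, ?_⟩, fun e => ?_⟩
  · rintro (hd | hd)
    · have := dvd_small hd (by omega) (by omega)
      omega
    · have := dvd_small hd (by omega) (by omega)
      omega
  · rintro (hd | hd)
    · right
      have : r + (i:ℤ) - (r + j) + 1 = 0 := by omega
      rw [this]; exact dvd_zero _
    · left
      have : r + (i:ℤ) - (r + j) - 1 = 0 := by omega
      rw [this]; exact dvd_zero _
  · have := dvd_small (hh.2.1 e) (by omega) (by omega)
    omega

theorem IC.index {H : SimpleGraph W} {c : ℤ → W} {m : ℤ} (h : IC H c m) (r : ℤ) (i : ℤ) :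
    c i = c (r - 1) ∨ ∃ t : ℕ, t ≤ (m - 2).toNat ∧ c i = c (r + t) := by
  obtain ⟨h4, h⟩ := h
  have h0 := Int.emod_nonneg (i - r) (show m ≠ 0 by omega)
  have h1 := Int.emod_lt_of_pos (i - r) (show 0 < m by omega)
  have h2 := Int.emod_add_mul_ediv (i - r) m
  by_cases hc : (i - r) % m = m - 1
  · left
    rw [(h _ _).2]
    refine ⟨(i - r) / m + 1, ?_⟩
    linarith
  · right
    refine ⟨((i - r) % m).toNat, by omega, ?_⟩
    rw [(h _ _).2]
    refine ⟨(i - r) / m, ?_⟩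
    have : (((i - r) % m).toNat : ℤ) = (i - r) % m := by omega
    rw [this]; linarith

theorem CleanOn.cyc3 {H : SimpleGraph W} {U T : Set W} (h : CleanOn H U T) {c : ℤ → W} {m : ℤ}
    (hc : IC H c m) (hU : ∀ i, c i ∈ U) {i j k : ℤ} (hij : c i ≠ c j) (hjk : c j ≠ c k)
    (hik : c i ≠ c k) (h1 : c i ∈ T) (h2 : c j ∈ T) (h3 : c k ∈ T) : False := by
  have hn : ∀ x, c x ∈ T → ∃ t : ℕ, t ≤ (m - 2).toNat ∧ c x = c (i + 2 + t) := by
    intro x hx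
    rcases hc.index (i + 2) x with h' | h'
    · exfalso
      refine h.stab _ (hU i) _ (hU x) h1 hx ?_
      rw [h', (hc.2 _ _).1]
      right
      ring_nf
      exact dvd_zero _
    · exact h'
  obtain ⟨a, ha, ha'⟩ := hn i h1
  obtain ⟨b, hb, hb'⟩ := hn j h2
  obtain ⟨d, hd, hd'⟩ := hn k h3
  obtain ⟨x, y, z, hxy, hyz, hx, hy, hz⟩ := sort3
    (fun t => t ≤ (m - 2).toNat ∧ c (i + 2 + t) ∈ T) a b d
    (by rintro rfl; exact hij (ha'.trans hb'.symm)) (by rintro rfl; exact hjk (hb'.trans hd'.symm))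
    (by rintro rfl; exact hik (ha'.trans hd'.symm)) ⟨ha, ha' ▸ h1⟩ ⟨hb, hb' ▸ h2⟩ ⟨hd, hd' ▸ h3⟩
  exact h.mount3 (hc.window (i + 2)) (fun t _ => hU _) hxy hyz hz.1 hx.2 hy.2 hz.2

theorem IP.pull {H : SimpleGraph W} {H₀ : SimpleGraph W₀} {U : Set W} (f : W → W₀)
    (hf : ∀ a ∈ U, ∀ b ∈ U, (H.Adj a b ↔ H₀.Adj (f a) (f b))) {p : ℕ → W} {n : ℕ}
    (hp : IP H p n) (hU : ∀ i, i ≤ n → p i ∈ U) : IP H₀ (fun i => f (p i)) n ∨ n = 2 := by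
  by_cases hn : n = 2
  · exact Or.inr hn
  left
  have key : ∀ i j, i ≤ n → j ≤ n → i < j → f (p i) = f (p j) → False := by
    intro i j hi hj hij he
    have tr : ∀ k, k ≤ n → (H.Adj (p i) (p k) ↔ H.Adj (p j) (p k)) := by
      intro k hk
      rw [hf _ (hU i hi) _ (hU k hk), hf _ (hU j hj) _ (hU k hk), he]
    have h1 := tr (i + 1) (by omega)
    rw [(hp i (i+1) hi (by omega)).1, (hp j (i+1) hj (by omega)).1] at h1
    have h2 : i = 0 := by
      by_contra h0
      have h2 := tr (i - 1) (by omega)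
      rw [(hp i (i-1) hi (by omega)).1, (hp j (i-1) hj (by omega)).1] at h2
      omega
    have h3 : j = n := by
      by_contra h0
      have h2 := tr (j + 1) (by omega)
      rw [(hp i (j+1) hi (by omega)).1, (hp j (j+1) hj (by omega)).1] at h2
      omega
    omega
  intro i j hi hj
  refine ⟨by rw [← hf _ (hU i hi) _ (hU j hj)]; exact (hp i j hi hj).1, fun e => ?_⟩
  rcases lt_trichotomy i j with h | h | h
  · exact (key i j hi hj h e).elim
  · exact h
  · exact (key j i hj hi h e.symm).elim

theorem IC.pull {H : SimpleGraph W} {H₀ : SimpleGraph W₀} {U : Set W} (f : W → W₀)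
    (hf : ∀ a ∈ U, ∀ b ∈ U, (H.Adj a b ↔ H₀.Adj (f a) (f b))) {c : ℤ → W} {m : ℤ}
    (hc : IC H c m) (hU : ∀ i, c i ∈ U) : IC H₀ (fun i => f (c i)) m ∨ m = 4 := by
  by_cases hn : m = 4
  · exact Or.inr hn
  left
  refine ⟨hc.1, fun i j => ⟨by rw [← hf _ (hU i) _ (hU j)]; exact (hc.2 i j).1, ⟨fun e => ?_, fun h => ?_⟩⟩⟩
  · have tr : ∀ k, (H.Adj (c i) (c k) ↔ H.Adj (c j) (c k)) := by
      intro k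
      rw [hf _ (hU i) _ (hU k), hf _ (hU j) _ (hU k)]
      simp only at e
      rw [e]
    have h1 := (tr (i + 1)).1 ((hc.2 _ _).1.2 (Or.inr (by ring_nf; exact dvd_zero _)))
    have h2 := (tr (i - 1)).1 ((hc.2 _ _).1.2 (Or.inl (by ring_nf; exact dvd_zero _)))
    rw [(hc.2 _ _).1] at h1 h2
    have e1 : j - (i + 1) + 1 = -(i - j) := by ring
    have e2 : j - (i - 1) - 1 = -(i - j) := by ring
    rw [e1, dvd_neg] at h1
    rw [e2, dvd_neg] at h2
    rcases h1 with h1 | h1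
    · rcases h2 with h2 | h2
      · exact h2
      · exfalso
        have := dvd_sub h2 h1
        have e3 : j - (i - 1) + 1 - (j - (i + 1) - 1) = 4 := by ring
        rw [e3] at this
        have := Int.le_of_dvd (by norm_num) this
        have := hc.1
        omega
    · exact h1
  · exact congrArg f ((hc.2 i j).2.2 h)

theorem CleanOn.pull {H : SimpleGraph W} {H₀ : SimpleGraph W₀} {U T : Set W} {T₀ : Set W₀}
    (h : CleanOn H₀ Set.univ T₀) (f : W → W₀)
    (hf : ∀ a ∈ U, ∀ b ∈ U, (H.Adj a b ↔ H₀.Adj (f a) (f b)))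
    (hT : ∀ a ∈ U, a ∈ T → f a ∈ T₀) : CleanOn H U T := by
  have tri : ∀ a ∈ U, ∀ b ∈ U, ∀ c ∈ U, H.Adj a b → H.Adj b c → H.Adj a c → False := by
    intro a ha b hb c hc h1 h2 h3
    rw [hf _ ‹_› _ ‹_›] at h1 h2 h3
    exact h.tri _ trivial _ trivial _ trivial h1 h2 h3
  have stab : ∀ a ∈ U, ∀ b ∈ U, a ∈ T → b ∈ T → H.Adj a b → False := by
    intro a ha b hb h1 h2 h3
    rw [hf _ ‹_› _ ‹_›] at h3
    exact h.stab _ trivial _ trivial (hT _ ha h1) (hT _ hb h2) h3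
  refine ⟨tri, stab, ?_, ?_, ?_⟩
  · intro p n j hp hU h0 hn hj0 hjn hj
    rcases hp.pull f hf hU with hq | rfl
    · exact h.mount _ n j hq (fun _ _ => trivial) (hT _ (hU _ (by omega)) h0)
        (hT _ (hU _ (by omega)) hn) hj0 hjn (hT _ (hU _ (by omega)) hj)
    · have : j = 1 := by omega
      subst this
      exact stab _ (hU 0 (by omega)) _ (hU 1 (by omega)) h0 hj
        ((hp 0 1 (by omega) (by omega)).1.2 (by omega))
  · intro p n w i j k hp hU h0 hn hw hwp hij hjk hk ai aj ak
    rcases hp.pull f hf hU with hq | rfl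
    · refine h.fan _ n (f w) i j k hq (fun _ _ => trivial) (hT _ (hU _ (by omega)) h0)
        (hT _ (hU _ (by omega)) hn) trivial ?_ hij hjk hk ?_ ?_ ?_
      · intro t ht e
        have hx : ∀ s, s ≤ n → H.Adj w (p s) → (t + 1 = s ∨ s + 1 = t) := by
          intro s hs ha
          rw [hf _ hw _ (hU s hs), e, ← hf _ (hU t ht) _ (hU s hs), (hp t s ht hs).1] at ha
          exact ha
        have := hx i (by omega) ai
        have := hx j (by omega) aj
        have := hx k (by omega) ak
        omega
      · exact (hf _ hw _ (hU _ (by omega))).1 ai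
      · exact (hf _ hw _ (hU _ (by omega))).1 aj
      · exact (hf _ hw _ (hU _ (by omega))).1 ak
    · have h1 : i = 0 := by omega
      have h2 : j = 1 := by omega
      subst h1 h2
      exact tri _ hw _ (hU 0 (by omega)) _ (hU 1 (by omega)) ai
        ((hp 0 1 (by omega) (by omega)).1.2 (by omega)) aj
  · intro c m w i j k hc hU hw hwc hij hjk hik ai aj ak
    rcases hc.pull f hf hU with hq | rfl
    · refine h.wheel _ m (f w) i j k hq (fun _ => trivial) trivial ?_ ?_ ?_ ?_ ?_ ?_ ?_
      · intro t e
        have hx : ∀ s, H.Adj w (c s) → (m ∣ t - s - 1 ∨ m ∣ t - s + 1) := by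
          intro s ha
          rw [hf _ hw _ (hU s), e, ← hf _ (hU t) _ (hU s), (hc.2 t s).1] at ha
          exact ha
        rw [Ne, (hc.2 _ _).2] at hij hjk hik
        have hs : ∀ a b : ℤ, (m ∣ t - a - 1 → m ∣ t - b - 1 → m ∣ a - b) ∧
            (m ∣ t - a + 1 → m ∣ t - b + 1 → m ∣ a - b) := by
          intro a b
          refine ⟨fun h1 h2 => ?_, fun h1 h2 => ?_⟩
          · have := dvd_sub h2 h1
            ring_nf at this ⊢
            exact this
          · have := dvd_sub h2 h1
            ring_nf at this ⊢
            exact this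
        have h1 := hs i j
        have h2 := hs j k
        have h3 := hs i k
        rcases hx i ai with q1 | q1 <;> rcases hx j aj with q2 | q2 <;>
          rcases hx k ak with q3 | q3 <;>
          first
          | exact hij (h1.1 q1 q2)
          | exact hij (h1.2 q1 q2)
          | exact hjk (h2.1 q2 q3)
          | exact hjk (h2.2 q2 q3)
          | exact hik (h3.1 q1 q3)
          | exact hik (h3.2 q1 q3)
      · rw [Ne, (hq.2 _ _).2, ← (hc.2 _ _).2]; exact hij
      · rw [Ne, (hq.2 _ _).2, ← (hc.2 _ _).2]; exact hjk
      · rw [Ne, (hq.2 _ _).2, ← (hc.2 _ _).2]; exact hik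
      · exact (hf _ hw _ (hU _)).1 ai
      · exact (hf _ hw _ (hU _)).1 aj
      · exact (hf _ hw _ (hU _)).1 ak
    · have t1 : ¬ H.Adj (c i) (c j) := fun hh => tri _ hw _ (hU i) _ (hU j) ai hh aj
      have t2 : ¬ H.Adj (c j) (c k) := fun hh => tri _ hw _ (hU j) _ (hU k) aj hh ak
      have t3 : ¬ H.Adj (c i) (c k) := fun hh => tri _ hw _ (hU i) _ (hU k) ai hh ak
      rw [(hc.2 _ _).1, not_or] at t1 t2 t3
      rw [Ne, (hc.2 _ _).2] at hij hjk hik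
      omega

theorem CleanOn.mono {H : SimpleGraph W} {U T U' T' : Set W} (h : CleanOn H U T) (hU : U' ⊆ U)
    (hT : T' ⊆ T) : CleanOn H U' T' where
  tri a ha b hb c hc := h.tri a (hU ha) b (hU hb) c (hU hc)
  stab a ha b hb h1 h2 := h.stab a (hU ha) b (hU hb) (hT h1) (hT h2)
  mount p n j hp hpU h0 hn hj hj' hjt :=
    h.mount p n j hp (fun i hi => hU (hpU i hi)) (hT h0) (hT hn) hj hj' (hT hjt)
  fan p n w i j k hp hpU h0 hn hw :=
    h.fan p n w i j k hp (fun i hi => hU (hpU i hi)) (hT h0) (hT hn) (hU hw)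
  wheel c m w i j k hc hcU hw := h.wheel c m w i j k hc (fun i => hU (hcU i)) (hU hw)

theorem CleanOn.pend {H : SimpleGraph W} {U N T T' : Set W} (h : CleanOn H U T)
    (hN : ∀ b ∈ N, ∃ t ∈ T, t ∈ U ∧ t ∉ T' ∧ ∀ y ∈ U ∪ N, H.Adj b y → y = t)
    (hT : ∀ a ∈ T', a ∈ N ∨ a ∈ T) : CleanOn H (U ∪ N) T' := by
  have two : ∀ b ∈ N, ∀ x ∈ U ∪ N, ∀ y ∈ U ∪ N, H.Adj b x → H.Adj b y → x = y := by
    intro b hb x hx y hy h1 h2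
    obtain ⟨t, _, _, _, ht⟩ := hN b hb
    rw [ht x hx h1, ht y hy h2]
  have inU : ∀ a ∈ U ∪ N, a ∉ N → a ∈ U := by
    intro a ha hn
    exact ha.resolve_right hn
  have inner : ∀ p n i, IP H p n → (∀ i, i ≤ n → p i ∈ U ∪ N) → 0 < i → i < n → p i ∈ U := by
    intro p n i hp hU h0 hn
    refine inU _ (hU i (by omega)) fun hb => ?_
    have := (hp _ _ (by omega) (by omega)).2 (two _ hb (p (i-1)) (hU _ (by omega)) (p (i+1))
      (hU _ (by omega)) ((hp _ _ (by omega) (by omega)).1.2 (by omega))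
      ((hp _ _ (by omega) (by omega)).1.2 (by omega)))
    omega
  have left : ∀ p n, IP H p n → (∀ i, i ≤ n → p i ∈ U ∪ N) → 2 ≤ n → p 0 ∈ T' →
      ∃ l, l ≤ 1 ∧ p l ∈ U ∧ p l ∈ T ∧ (∀ j, 0 < j → p j ∈ T' → l < j) ∧
        (∀ w ∈ U ∪ N, (∀ i, i ≤ n → w ≠ p i) → ∀ j, H.Adj w (p j) → l ≤ j) := by
    intro p n hp hU hn h0
    by_cases hb : p 0 ∈ N
    · obtain ⟨t, ht, htU, htT, hy⟩ := hN _ hb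
      have h1 := hy (p 1) (hU 1 (by omega)) ((hp _ _ (by omega) (by omega)).1.2 (by omega))
      refine ⟨1, le_rfl, h1 ▸ htU, h1 ▸ ht, ?_, ?_⟩
      · intro j hj hjT
        by_contra hc
        have : j = 1 := by omega
        subst this
        exact htT (h1 ▸ hjT)
      · intro w hw hwp j ha
        by_contra hc
        have : j = 0 := by omega
        subst this
        exact hwp 1 (by omega) ((hy w hw ha.symm).trans h1.symm)
    · exact ⟨0, by omega, inU _ (hU 0 (by omega)) hb, (hT _ h0).resolve_left hb,
        fun j hj _ => hj, fun w _ _ j _ => by omega⟩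
  have both : ∀ p n, IP H p n → (∀ i, i ≤ n → p i ∈ U ∪ N) → 2 ≤ n → p 0 ∈ T' → p n ∈ T' →
      ∃ l r, l ≤ 1 ∧ r ≤ n ∧ p l ∈ T ∧ p r ∈ T ∧ l ≤ r ∧ (∀ i, l ≤ i → i ≤ r → p i ∈ U) ∧
        (∀ j, 0 < j → j < n → p j ∈ T' → l < j ∧ j < r) ∧
        (∀ w ∈ U ∪ N, (∀ i, i ≤ n → w ≠ p i) → ∀ j, j ≤ n → H.Adj w (p j) → l ≤ j ∧ j ≤ r) := by
    intro p n hp hU h2 h0 hn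
    obtain ⟨l, hl, hlU, hlT, hl1, hl2⟩ := left p n hp hU h2 h0
    obtain ⟨r, hr, hrU, hrT, hr1, hr2⟩ := left _ n hp.rev (fun i hi => hU _ (by omega)) h2
      (by simpa using hn)
    refine ⟨l, n - r, hl, by omega, hlT, hrT, by omega, ?_, ?_, ?_⟩
    · intro i hi hi'
      by_cases e1 : i = l
      · exact e1 ▸ hlU
      by_cases e2 : i = n - r
      · exact e2 ▸ hrU
      exact inner p n i hp hU (by omega) (by omega)
    · intro j hj hjn hjT
      have e : n - (n - j) = j := by omega
      have := hl1 j hj hjT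
      have := hr1 (n - j) (by omega) (by simpa [e] using hjT)
      omega
    · intro w hw hwp j hj ha
      have e : n - (n - j) = j := by omega
      have := hl2 w hw hwp j ha
      have := hr2 w hw (fun i hi => hwp _ (by omega)) (n - j) (by simpa [e] using ha)
      omega
  refine ⟨?_, ?_, ?_, ?_, ?_⟩
  · intro a ha b hb c hc h1 h2 h3
    by_cases na : a ∈ N
    · exact h2.ne (two a na b hb c hc h1 h3)
    by_cases nb : b ∈ N
    · exact h3.ne (two b nb a ha c hc h1.symm h2)
    by_cases nc : c ∈ N
    · exact h1.ne (two c nc a ha b hb h3.symm h2.symm)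
    exact h.tri a (inU a ha na) b (inU b hb nb) c (inU c hc nc) h1 h2 h3
  · intro a ha b hb h1 h2 h3
    by_cases na : a ∈ N
    · obtain ⟨t, _, _, ht, hy⟩ := hN a na
      exact ht (hy b hb h3 ▸ h2)
    by_cases nb : b ∈ N
    · obtain ⟨t, _, _, ht, hy⟩ := hN b nb
      exact ht (hy a ha h3.symm ▸ h1)
    exact h.stab a (inU a ha na) b (inU b hb nb) ((hT a h1).resolve_left na)
      ((hT b h2).resolve_left nb) h3
  · intro p n j hp hU h0 hn hj0 hjn hj
    obtain ⟨l, r, hl, hr, hlT, hrT, hlr, hin, hj', -⟩ := both p n hp hU (by omega) h0 hn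
    have := hj' j hj0 hjn hj
    have hjN : p j ∈ T := by
      refine (hT _ hj).resolve_left fun hb => ?_
      have := (hp _ _ (by omega) (by omega)).2 (two _ hb (p (j-1)) (hU _ (by omega)) (p (j+1))
        (hU _ (by omega)) ((hp _ _ (by omega) (by omega)).1.2 (by omega))
        ((hp _ _ (by omega) (by omega)).1.2 (by omega)))
      omega
    rcases hp.sub l r hr with hs | hs
    · refine h.mount _ _ (j - l) hs (fun t ht => hin _ (by omega) (by omega)) (by simpa using hlT)
        ?_ (by omega) (by omega) ?_
      · have : l + (r - l) = r := by omega
        simpa [this] using hrT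
      · have : l + (j - l) = j := by omega
        simpa [this] using hjN
    · omega
  · intro p n w i j k hp hU h0 hn hw hwp hij hjk hk ai aj ak
    obtain ⟨l, r, hl, hr, hlT, hrT, hlr, hin, -, hj'⟩ := both p n hp hU (by omega) h0 hn
    have hwU : w ∈ U := by
      refine inU w hw fun hb => ?_
      have := (hp i j (by omega) (by omega)).2
        (two w hb _ (hU i (by omega)) _ (hU j (by omega)) ai aj)
      omega
    have := hj' w hw hwp i (by omega) ai
    have := hj' w hw hwp k (by omega) ak
    rcases hp.sub l r hr with hs | hs
    · refine h.fan _ _ w (i - l) (j - l) (k - l) hs (fun t ht => hin _ (by omega) (by omega))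
        (by simpa using hlT) ?_ hwU (fun t ht => hwp _ (by omega)) (by omega) (by omega)
        (by omega) ?_ ?_ ?_
      · have : l + (r - l) = r := by omega
        simpa [this] using hrT
      · have : l + (i - l) = i := by omega
        simpa [this] using ai
      · have : l + (j - l) = j := by omega
        simpa [this] using aj
      · have : l + (k - l) = k := by omega
        simpa [this] using ak
    · omega
  · intro c m w i j k hc hU hw hwc hij hjk hik ai aj ak
    refine h.wheel c m w i j k hc (fun t => inU _ (hU t) fun hb => ?_) (inU w hw fun hb => ?_)
      hwc hij hjk hik ai aj ak
    · have := (hc.2 _ _).2.1 (two _ hb _ (hU (t-1)) _ (hU (t+1))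
        ((hc.2 _ _).1.2 (Or.inl (by ring_nf; exact dvd_zero _)))
        ((hc.2 _ _).1.2 (Or.inr (by ring_nf; exact dvd_zero _))))
      have := dvd_small this (by have := hc.1; omega) (by have := hc.1; omega)
      omega
    · exact hij (two w hb _ (hU i) _ (hU j) ai aj)

theorem disc (Q : ℕ → Prop) (a b : ℕ) (hab : a ≤ b) (ha : Q a) (hb : ¬ Q b) :
    ∃ t, a ≤ t ∧ t < b ∧ Q t ∧ ¬ Q (t + 1) := by
  induction b, hab using Nat.le_induction with
  | base => exact absurd ha hb
  | succ b hab ih =>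
    by_cases h : Q b
    · exact ⟨b, hab, by omega, h, hb⟩
    · obtain ⟨t, h1, h2, h3⟩ := ih h
      exact ⟨t, h1, by omega, h3⟩

theorem pathJ {H : SimpleGraph W} {B X : Set W} (hBX : ∀ a ∈ B, a ∉ X)
    (h2 : ∀ b ∈ B, ∀ y, H.Adj b y → y ∈ B ∨ y ∈ X)
    (h3 : ∀ x ∈ X, ∀ x' ∈ X, ∀ u, u ∉ B → H.Adj x u → H.Adj x' u)
    {p : ℕ → W} {n : ℕ} (hp : IP H p n) (h0 : p 0 ∉ B) (hn : p n ∉ B) {i : ℕ} (hi : i ≤ n)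
    (hiB : p i ∈ B) : ∀ k, k ≤ n → p k ∈ B ∨ p k ∈ X := by
  have main : ∀ (p : ℕ → W), IP H p n → p n ∉ B → ∀ i, i ≤ n → p i ∈ B → ∀ k, k < i →
      p k ∈ B ∨ p k ∈ X := by
    intro p hp hn i hi hiB k hk
    by_contra hc
    obtain ⟨t, ht1, ht2, ht3, ht4⟩ := disc (fun t => ¬ (p t ∈ B ∨ p t ∈ X)) k i hk.le hc
      (by simp [hiB])
    obtain ⟨r, hr1, hr2, hr3, hr4⟩ := disc (fun t => p t ∈ B) i n hi hiB hn
    have hrX := (h2 _ hr3 _ ((hp r (r+1) (by omega) (by omega)).1.2 (by omega))).resolve_left hr4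
    rw [not_not] at ht4
    have ha : H.Adj (p (t+1)) (p t) := (hp _ _ (by omega) (by omega)).1.2 (by omega)
    have htB : p (t+1) ∉ B := fun hb => ht3 (h2 _ hb _ ha)
    have htX := ht4.resolve_left htB
    have := h3 _ htX _ hrX (p t) (fun h => ht3 (Or.inl h)) ha
    rw [(hp _ _ (by omega) (by omega)).1] at this
    omega
  intro k hk
  rcases lt_trichotomy k i with h | h | h
  · exact main p hp hn i hi hiB k h
  · exact h ▸ Or.inl hiB
  · have e1 : n - (n - i) = i := by omega
    have e2 : n - (n - k) = k := by omega
    have := main _ hp.rev (by simpa using h0) (n - i) (by omega) (by simpa [e1] using hiB) (n - k)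
      (by omega)
    simpa [e2] using this

theorem CleanOn.splice {H : SimpleGraph W} {U T : Set W} (h : CleanOn H U T) {p : ℕ → W} {n : ℕ}
    (hp : IP H p n) (hU : ∀ i, i ≤ n → p i ∈ U) (h0 : p 0 ∈ T) (hn : p n ∈ T) {w : W}
    (hw : w ∈ U) (hwT : w ∈ T) (hwp : ∀ i, i ≤ n → w ≠ p i) {a b : ℕ} (hab : a < b) (hb : b ≤ n)
    (ha1 : H.Adj w (p a)) (hb1 : H.Adj w (p b)) : False := by
  classical
  let F := (Finset.range (n+1)).filter (fun t => H.Adj w (p t))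
  have hF : ∀ t, t ∈ F ↔ t ≤ n ∧ H.Adj w (p t) := by
    intro t
    simp only [F, Finset.mem_filter, Finset.mem_range]
    rw [Nat.lt_succ_iff]
  have haF : a ∈ F := (hF a).2 ⟨by omega, ha1⟩
  have hbF : b ∈ F := (hF b).2 ⟨hb, hb1⟩
  obtain ⟨x, hxF, hx⟩ := F.exists_min_image id ⟨a, haF⟩
  obtain ⟨y, hyF, hy⟩ := F.exists_max_image id ⟨a, haF⟩
  simp only [id] at hx hy
  have hxa := hx a haF
  have hby := hy b hbF
  obtain ⟨hxn, hxw⟩ := (hF x).1 hxF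
  obtain ⟨hyn, hyw⟩ := (hF y).1 hyF
  have hx0 : x ≠ 0 := by
    rintro rfl
    exact h.stab _ hw _ (hU 0 (by omega)) hwT h0 hxw
  have hyn' : y ≠ n := by
    rintro rfl
    exact h.stab _ hw _ (hU y (by omega)) hwT hn hyw
  have hxy : x + 1 ≠ y := by
    intro e
    exact h.tri _ hw _ (hU x hxn) _ (hU y hyn) hxw ((hp _ _ hxn hyn).1.2 (Or.inl e)) hyw
  have hnot : ∀ t, t ≤ n → (t < x ∨ y < t) → ¬ H.Adj w (p t) := by
    intro t ht htt ha
    have h1 := hx t ((hF t).2 ⟨ht, ha⟩)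
    have h2 := hy t ((hF t).2 ⟨ht, ha⟩)
    omega
  let g : ℕ → ℕ := fun t => if t ≤ x then t else t + (y - x - 2)
  let q : ℕ → W := fun t => if t = x + 1 then w else p (g t)
  have hg1 : ∀ t, t ≤ x → g t = t := fun t ht => by simp [g, ht]
  have hg2 : ∀ t, x < t → g t = t + (y - x - 2) := fun t ht => by
    simp [g, Nat.not_le.2 ht]
  have hq1 : q (x+1) = w := by simp [q]
  have hq2 : ∀ t, t ≠ x + 1 → q t = p (g t) := fun t ht => by simp [q, ht]
  have hgn : ∀ t, t ≤ n - (y - x - 2) → t ≠ x + 1 → g t ≤ n ∧ (t ≤ x ∧ g t = t ∨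
      x + 2 ≤ t ∧ g t = t + (y - x - 2)) := by
    intro t ht htx
    rcases Nat.lt_or_ge x t with h1 | h1
    · have := hg2 t h1
      omega
    · have := hg1 t h1
      omega
  have hwa : ∀ t, t ≤ n - (y - x - 2) → t ≠ x + 1 → (H.Adj w (p (g t)) ↔ (t = x ∨ t = x + 2)) := by
    intro t ht htx
    obtain ⟨h1, h2⟩ := hgn t ht htx
    constructor
    · intro ha
      by_contra hc
      exact hnot _ h1 (by omega) ha
    · rintro (e | e)
      · have : g t = x := by omega
        rw [this]; exact hxw
      · have : g t = y := by omega
        rw [this]; exact hyw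
  refine h.mount q (n - (y - x - 2)) (x + 1) ?_ ?_ ?_ ?_ (by omega) (by omega) (by rw [hq1]; exact hwT)
  · intro i j hi hj
    by_cases ei : i = x + 1
    · by_cases ej : j = x + 1
      · subst ei ej
        simp
      · rw [ei, hq1, hq2 j ej, hwa j hj ej]
        refine ⟨by omega, fun e => ?_⟩
        exact (hwp _ (hgn j hj ej).1 e).elim
    · by_cases ej : j = x + 1
      · rw [ej, hq1, hq2 i ei, H.adj_comm, hwa i hi ei]
        refine ⟨by omega, fun e => ?_⟩
        exact (hwp _ (hgn i hi ei).1 e.symm).elim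
      · rw [hq2 i ei, hq2 j ej]
        obtain ⟨h1, h2⟩ := hgn i hi ei
        obtain ⟨h3, h4⟩ := hgn j hj ej
        rw [(hp _ _ h1 h3).1]
        refine ⟨by omega, fun e => ?_⟩
        have := (hp _ _ h1 h3).2 e
        omega
  · intro i hi
    by_cases ei : i = x + 1
    · rw [ei, hq1]; exact hw
    · rw [hq2 i ei]; exact hU _ (hgn i hi ei).1
  · rw [hq2 0 (by omega), hg1 0 (by omega)]; exact h0
  · rw [hq2 _ (by omega), hg2 _ (by omega)]
    have : n - (y - x - 2) + (y - x - 2) = n := by omega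
    rw [this]; exact hn

theorem CleanOn.join {H : SimpleGraph W} {T : Set W} {ι : Type*} (B X : ι → Set W)
    (h1 : ∀ s, X s ⊆ T) (h4 : ∀ s, ∀ b ∈ B s, b ∉ T)
    (h2 : ∀ s, ∀ b ∈ B s, ∀ y, H.Adj b y → y ∈ B s ∨ y ∈ X s)
    (h3 : ∀ s, ∀ x ∈ X s, ∀ x' ∈ X s, ∀ u, u ∉ B s → H.Adj x u → H.Adj x' u)
    (hA : CleanOn H {a | ∀ s, a ∉ B s} T) (hB : ∀ s, CleanOn H (B s ∪ X s) (X s)) :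
    CleanOn H Set.univ T := by
  have h5 : ∀ s, ∀ a ∈ B s, a ∉ X s := fun s a ha hx => h4 s a ha (h1 s hx)
  have h6 : ∀ s, ∀ w, w ∉ B s ∪ X s → ∀ y, y ∈ B s ∪ X s → H.Adj w y → y ∈ X s := by
    intro s w hw y hy ha
    refine hy.resolve_left fun hb => hw (h2 s y hb w ha.symm)
  have tri : ∀ a b c, H.Adj a b → H.Adj b c → H.Adj a c → False := by
    have key : ∀ s a b c, a ∈ B s → H.Adj a b → H.Adj b c → H.Adj a c → False := by
      intro s a b c ha e1 e2 e3
      exact (hB s).tri a (Or.inl ha) b (h2 s a ha b e1) c (h2 s a ha c e3) e1 e2 e3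
    intro a b c e1 e2 e3
    by_cases ha : ∃ s, a ∈ B s
    · obtain ⟨s, ha⟩ := ha
      exact key s a b c ha e1 e2 e3
    by_cases hb : ∃ s, b ∈ B s
    · obtain ⟨s, ha⟩ := hb
      exact key s b c a ha e2 e3.symm e1.symm
    by_cases hc : ∃ s, c ∈ B s
    · obtain ⟨s, ha⟩ := hc
      exact key s c a b ha e3.symm e1 e2.symm
    push Not at ha hb hc
    exact hA.tri a ha b hb c hc e1 e2 e3
  have TA : ∀ a ∈ T, ∀ s, a ∉ B s := fun a ha s hb => h4 s a hb ha
  refine ⟨fun a _ b _ c _ => tri a b c, ?_, ?_, ?_, ?_⟩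
  · intro a _ b _ ha hb e
    exact hA.stab a (TA a ha) b (TA b hb) ha hb e
  · intro p n j hp _ h0 hn hj0 hjn hj
    by_cases hm : ∃ s i, i ≤ n ∧ p i ∈ B s
    · obtain ⟨s, i, hi, hiB⟩ := hm
      have hall := pathJ (h5 s) (h2 s) (h3 s) hp (TA _ h0 s) (TA _ hn s) hi hiB
      exact (hB s).mount p n j hp hall ((hall 0 (by omega)).resolve_left (TA _ h0 s))
        ((hall n (by omega)).resolve_left (TA _ hn s)) hj0 hjn
        ((hall j (by omega)).resolve_left (TA _ hj s))
    · push Not at hm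
      exact hA.mount p n j hp (fun i hi s => hm s i hi) h0 hn hj0 hjn hj
  · intro p n w i j k hp _ h0 hn _ hwp hij hjk hk ai aj ak
    by_cases hm : ∃ s i, i ≤ n ∧ p i ∈ B s
    · obtain ⟨s, i', hi, hiB⟩ := hm
      have hall := pathJ (h5 s) (h2 s) (h3 s) hp (TA _ h0 s) (TA _ hn s) hi hiB
      by_cases hw : w ∈ B s ∪ X s
      · exact (hB s).fan p n w i j k hp hall ((hall 0 (by omega)).resolve_left (TA _ h0 s))
          ((hall n (by omega)).resolve_left (TA _ hn s)) hw hwp hij hjk hk ai aj ak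
      · exact (hB s).mount3 hp hall hij hjk hk (h6 s w hw _ (hall _ (by omega)) ai)
          (h6 s w hw _ (hall _ (by omega)) aj) (h6 s w hw _ (hall _ (by omega)) ak)
    · push Not at hm
      by_cases hw : ∃ s, w ∈ B s
      · obtain ⟨s, hw⟩ := hw
        exact hA.mount3 hp (fun i hi s => hm s i hi) hij hjk hk
          (h1 s ((h2 s w hw _ ai).resolve_left (hm s i (by omega))))
          (h1 s ((h2 s w hw _ aj).resolve_left (hm s j (by omega))))
          (h1 s ((h2 s w hw _ ak).resolve_left (hm s k (by omega))))
      · push Not at hw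
        exact hA.fan p n w i j k hp (fun i hi s => hm s i hi) h0 hn hw hwp hij hjk hk ai aj ak
  · intro c m w i j k hc _ _ hwc hij hjk hik ai aj ak
    by_cases hm : ∃ s i, c i ∈ B s
    · obtain ⟨s, b, hb⟩ := hm
      by_cases hall : ∀ i, c i ∈ B s ∪ X s
      · by_cases hw : w ∈ B s ∪ X s
        · exact (hB s).wheel c m w i j k hc hall hw hwc hij hjk hik ai aj ak
        · exact (hB s).cyc3 hc hall hij hjk hik (h6 s w hw _ (hall _) ai)
            (h6 s w hw _ (hall _) aj) (h6 s w hw _ (hall _) ak)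
      · push Not at hall
        obtain ⟨a, ha⟩ := hall
        have hm4 := hc.1
        -- find u
        obtain ⟨u, hu, hu1⟩ : ∃ u, c u ∉ B s ∪ X s ∧ c (u + 1) ∈ B s ∪ X s := by
          by_contra hcon
          push Not at hcon
          have hind : ∀ t : ℕ, c (a + t) ∉ B s ∪ X s := by
            intro t
            induction t with
            | zero => simpa using ha
            | succ t ih =>
              have := hcon _ ih
              push_cast
              rwa [← add_assoc]
          rcases hc.index (a + 1) b with hh | ⟨t, _, hh⟩
          · have : a + 1 - 1 = a := by ring
            rw [this] at hh
            exact ha (hh ▸ Or.inl hb)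
          · have := hind (t + 1)
            have e : a + ((t + 1 : ℕ) : ℤ) = a + 1 + t := by push_cast; ring
            rw [e, ← hh] at this
            exact this (Or.inl hb)
        have huB : c u ∉ B s := fun h => hu (Or.inl h)
        have adju : ∀ t : ℕ, t ≤ (m-2).toNat →
            (H.Adj (c u) (c (u + 1 + t)) ↔ (t = 0 ∨ t = (m-2).toNat)) := by
          intro t ht
          rw [(hc.2 _ _).1]
          constructor
          · rintro (hd | hd)
            · right
              have hd' : m ∣ u - (u + 1 + t) - 1 + m := dvd_add hd (dvd_refl m)
              have := dvd_small hd' (by omega) (by omega)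
              omega
            · left
              have := dvd_small hd (by omega) (by omega)
              omega
          · rintro (e | e)
            · right
              subst e
              have : u - (u + 1 + ((0:ℕ):ℤ)) + 1 = 0 := by push_cast; ring
              rw [this]; exact dvd_zero _
            · left
              have : u - (u + 1 + (t:ℤ)) - 1 = -m := by omega
              rw [this]; exact (dvd_neg.2 (dvd_refl m))
        have hp := hc.window (u + 1)
        have hend : ∀ t : ℕ, t ≤ (m-2).toNat → (t = 0 ∨ t = (m-2).toNat) →
            c (u + 1 + t) ∉ B s := by
          intro t ht ht' hB'
          exact hu (h2 s _ hB' _ ((adju t ht).2 ht').symm)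
        obtain ⟨t₀, ht₀, ht₀'⟩ : ∃ t : ℕ, t ≤ (m-2).toNat ∧ c (u + 1 + t) ∈ B s := by
          rcases hc.index (u + 1) b with hh | ⟨t, ht, hh⟩
          · have : u + 1 - 1 = u := by ring
            rw [this] at hh
            exact (huB (hh ▸ hb)).elim
          · exact ⟨t, ht, hh ▸ hb⟩
        have hpall := pathJ (h5 s) (h2 s) (h3 s) hp (hend 0 (by omega) (Or.inl rfl))
          (hend _ le_rfl (Or.inr rfl)) ht₀ ht₀'
        have hp0 := (hpall 0 (by omega)).resolve_left (hend 0 (by omega) (Or.inl rfl))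
        have hpn := (hpall _ le_rfl).resolve_left (hend _ le_rfl (Or.inr rfl))
        have idx : ∀ x, c x = c u ∨ ∃ t : ℕ, t ≤ (m-2).toNat ∧ c x = c (u + 1 + t) := by
          intro x
          have := hc.index (u+1) x
          have e : u + 1 - 1 = u := by ring
          rwa [e] at this
        have hxu : ∀ y ∈ X s, H.Adj y (c u) := by
          intro y hy
          exact h3 s _ hp0 y hy _ huB ((adju 0 (by omega)).2 (Or.inl rfl)).symm
        by_cases hwB : w ∈ B s
        · have hn : ∀ x, H.Adj w (c x) → ∃ t : ℕ, t ≤ (m-2).toNat ∧ c x = c (u + 1 + t) := by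
            intro x hx
            refine (idx x).resolve_left fun e => hu ?_
            rw [← e]
            exact h2 s w hwB _ hx
          obtain ⟨a, ha, ha'⟩ := hn i ai
          obtain ⟨b, hb, hb'⟩ := hn j aj
          obtain ⟨d, hd, hd'⟩ := hn k ak
          obtain ⟨x, y, z, hxy, hyz, hx, hy, hz⟩ := sort3
            (fun t => t ≤ (m - 2).toNat ∧ H.Adj w (c (u + 1 + t))) a b d
            (by rintro rfl; exact hij (ha'.trans hb'.symm))
            (by rintro rfl; exact hjk (hb'.trans hd'.symm))
            (by rintro rfl; exact hik (ha'.trans hd'.symm)) ⟨ha, ha' ▸ ai⟩ ⟨hb, hb' ▸ aj⟩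
            ⟨hd, hd' ▸ ak⟩
          exact (hB s).fan _ _ w x y z hp hpall hp0 hpn (Or.inl hwB) (fun t _ => hwc _) hxy hyz
            hz.1 hx.2 hy.2 hz.2
        by_cases hwX : w ∈ X s
        · have fin : ∀ x y, c x ≠ c y → c x ≠ c u → c y ≠ c u → H.Adj w (c x) → H.Adj w (c y) →
              False := by
            intro x y hxy hx hy ax ay
            obtain ⟨a, ha, ha'⟩ := (idx x).resolve_left hx
            obtain ⟨b, hb, hb'⟩ := (idx y).resolve_left hy
            rw [ha'] at ax
            rw [hb'] at ay
            rcases lt_trichotomy a b with h | h | h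
            · exact (hB s).splice hp hpall hp0 hpn (Or.inr hwX) hwX (fun t _ => hwc _) h hb ax ay
            · subst h; exact hxy (ha'.trans hb'.symm)
            · exact (hB s).splice hp hpall hp0 hpn (Or.inr hwX) hwX (fun t _ => hwc _) h ha ay ax
          by_cases e1 : c i = c u
          · exact fin j k hjk (e1 ▸ hij.symm) (e1 ▸ hik.symm) aj ak
          by_cases e2 : c j = c u
          · exact fin i k hik e1 (e2 ▸ hjk.symm) ai ak
          exact fin i j hij e1 e2 ai aj
        · have hw : w ∉ B s ∪ X s := fun h => h.elim hwB hwX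
          have hadj : ∀ x, H.Adj w (c x) → c x ≠ c u → ¬ H.Adj w (c u) := by
            intro x hx hxu' hwu
            obtain ⟨a, ha, ha'⟩ := (idx x).resolve_left hxu'
            have hX : c x ∈ X s := h6 s w hw _ (ha' ▸ hpall a ha) hx
            exact tri _ _ _ hx (hxu _ hX) hwu
          have hends : ∀ x, H.Adj w (c x) → c x ≠ c u →
              c x = c (u + 1 + (0:ℕ)) ∨ c x = c (u + 1 + ((m-2).toNat : ℕ)) := by
            intro x hx hxu'
            obtain ⟨a, ha, ha'⟩ := (idx x).resolve_left hxu'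
            have hX : c x ∈ X s := h6 s w hw _ (ha' ▸ hpall a ha) hx
            have := (hxu _ hX).symm
            rw [ha', adju a ha] at this
            rcases this with e | e
            · left; rw [ha', e]
            · right; rw [ha', e]
          by_cases e1 : c i = c u
          · exact hadj j aj (e1 ▸ hij.symm) (e1 ▸ ai)
          by_cases e2 : c j = c u
          · exact hadj i ai e1 (e2 ▸ aj)
          by_cases e3 : c k = c u
          · exact hadj i ai e1 (e3 ▸ ak)
          rcases hends i ai e1 with f1 | f1 <;> rcases hends j aj e2 with f2 | f2 <;>
            rcases hends k ak e3 with f3 | f3 <;>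
            first
            | exact hij (f1.trans f2.symm)
            | exact hjk (f2.trans f3.symm)
            | exact hik (f1.trans f3.symm)
    · push Not at hm
      by_cases hw : ∃ s, w ∈ B s
      · obtain ⟨s, hw⟩ := hw
        exact hA.cyc3 hc (fun i s => hm s i) hij hjk hik
          (h1 s ((h2 s w hw _ ai).resolve_left (hm s i)))
          (h1 s ((h2 s w hw _ aj).resolve_left (hm s j)))
          (h1 s ((h2 s w hw _ ak).resolve_left (hm s k)))
      · push Not at hw
        exact hA.wheel c m w i j k hc (fun i s => hm s i) hw hwc hij hjk hik ai aj ak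

theorem clean_small {H : SimpleGraph W} {T : Set W} (h : ∀ a b c : W, a = b ∨ b = c ∨ a = c)
    (hT : ∀ a ∈ T, ∀ b ∈ T, a = b) : CleanOn H Set.univ T where
  tri a _ b _ c _ e1 e2 e3 := by
    rcases h a b c with e | e | e
    · exact e1.ne e
    · exact e2.ne e
    · exact e3.ne e
  stab a _ b _ h1 h2 e := e.ne (hT a h1 b h2)
  mount p n j hp _ h0 hn hj hj' _ := by
    have := (hp 0 n (by omega) (by omega)).2 (hT _ h0 _ hn)
    omega
  fan p n w i j k hp _ _ _ _ _ hij hjk hk _ _ _ := by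
    rcases h (p i) (p j) (p k) with e | e | e
    · have := (hp _ _ (by omega) (by omega)).2 e
      omega
    · have := (hp _ _ (by omega) (by omega)).2 e
      omega
    · have := (hp _ _ (by omega) (by omega)).2 e
      omega
  wheel c m w i j k _ _ _ _ hij hjk hik _ _ _ := by
    rcases h (c i) (c j) (c k) with e | e | e
    · exact hij e
    · exact hjk e
    · exact hik e

theorem no_wheel {H : SimpleGraph W} {T : Set W} (h : CleanOn H Set.univ T) (s : Set W) :
    ¬ IsWheel (H.induce s) := by
  rintro ⟨w, n, hn, ⟨e⟩, h3⟩
  obtain ⟨k, rfl⟩ : ∃ k, n = k + 2 := ⟨n - 2, by omega⟩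
  let z : ℤ → Fin (k + 2) := fun i => ((i : ZMod (k + 2)) : ZMod (k+2))
  let c : ℤ → W := fun i => ((e.symm (z i)).1.1 : W)
  have cz : ∀ i j, c i = c j ↔ z i = z j := by
    intro i j
    simp only [c]
    rw [← Subtype.ext_iff, ← Subtype.ext_iff]
    exact e.symm.injective.eq_iff
  have zeq : ∀ i j, z i = z j ↔ ((k + 2 : ℕ) : ℤ) ∣ i - j := by
    intro i j
    have := ZMod.intCast_eq_intCast_iff_dvd_sub j i (k+2)
    rw [← this]
    exact eq_comm
  have hc : IC H c ((k + 2 : ℕ) : ℤ) := by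
    refine ⟨by exact_mod_cast hn, fun i j => ⟨?_, (cz i j).trans (zeq i j)⟩⟩
    have h1 : H.Adj (c i) (c j) ↔ (SimpleGraph.cycleGraph (k+2)).Adj (z i) (z j) := by
      rw [← e.symm.map_adj_iff]
      rfl
    rw [h1, SimpleGraph.cycleGraph_adj]
    have h2 : ∀ i j, z i - z j = 1 ↔ ((k + 2 : ℕ) : ℤ) ∣ i - j - 1 := by
      intro i j
      have : z i - z j = 1 ↔ z i = z (j + 1) := by
        have : z (j + 1) = z j + 1 := by
          show (((j + 1 : ℤ) : ZMod (k + 2))) = ((j : ZMod (k+2))) + 1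
          push_cast; rfl
        rw [this, sub_eq_iff_eq_add, add_comm (1 : Fin (k+2))]
      rw [this, zeq]
      ring_nf
    rw [h2, h2]
    refine or_congr Iff.rfl ?_
    rw [← dvd_neg]
    ring_nf
  have surj : ∀ x : s, x ≠ w → ∃ i, c i = x.1 := by
    intro x hx
    refine ⟨((e ⟨x, hx⟩ : Fin (k+2)).val : ℤ), ?_⟩
    have : z ((e ⟨x, hx⟩ : Fin (k+2)).val : ℤ) = e ⟨x, hx⟩ := by
      show ((((e ⟨x, hx⟩ : Fin (k+2)).val : ℤ) : ZMod (k+2))) = _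
      rw [Int.cast_natCast]
      exact ZMod.natCast_zmod_val (n := k+2) (e ⟨x, hx⟩)
    simp only [c]
    rw [this, RelIso.symm_apply_apply]
  obtain ⟨t, ht, htc⟩ := Set.exists_subset_card_eq h3
  obtain ⟨x, y, v, hxy, hxv, hyv, rfl⟩ := Set.ncard_eq_three.1 htc
  have ax : (H.induce s).Adj w x := ht (by simp)
  have ay : (H.induce s).Adj w y := ht (by simp)
  have av : (H.induce s).Adj w v := ht (by simp)
  obtain ⟨i, hi⟩ := surj x ax.ne'
  obtain ⟨j, hj⟩ := surj y ay.ne'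
  obtain ⟨l, hl⟩ := surj v av.ne'
  refine h.wheel c _ w.1 i j l hc (fun _ => trivial) trivial ?_ ?_ ?_ ?_ ?_ ?_ ?_
  · intro r hr
    exact (e.symm (z r)).2 (Subtype.ext hr.symm)
  · rw [hi, hj]; exact fun h => hxy (Subtype.ext h)
  · rw [hj, hl]; exact fun h => hyv (Subtype.ext h)
  · rw [hi, hl]; exact fun h => hxv (Subtype.ext h)
  · rw [hi]; exact ax
  · rw [hj]; exact ay
  · rw [hl]; exact av

theorem star_ll (P : GSPair) (u v : P.V) : (GStar P).Adj (Sum.inl u) (Sum.inl v) ↔ P.G.Adj u v := by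
  simp only [GStar, SimpleGraph.fromRel_adj]
  constructor
  · rintro ⟨-, (⟨a, b, h1, h2, h⟩ | ⟨a, b, h1, -⟩) | (⟨a, b, h1, h2, h⟩ | ⟨a, b, h1, -⟩)⟩
    · cases h1; cases h2; exact h
    · cases h1
    · cases h1; cases h2; exact h.symm
    · cases h1
  · intro h
    exact ⟨fun e => h.ne (Sum.inl.inj e), Or.inl (Or.inl ⟨u, v, rfl, rfl, h⟩)⟩

theorem star_rl (P : GSPair) (A : P.S) (v : P.V) :
    (GStar P).Adj (Sum.inr A) (Sum.inl v) ↔ v ∈ A.1 := by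
  simp only [GStar, SimpleGraph.fromRel_adj]
  constructor
  · rintro ⟨-, (⟨a, b, h1, h2, h⟩ | ⟨a, b, h1, h2, h⟩) | (⟨a, b, h1, h2, h⟩ | ⟨a, b, h1, h2, h⟩)⟩
    · cases h1
    · cases h1; cases h2; exact h
    · cases h2
    · cases h1
  · intro h
    exact ⟨by simp, Or.inl (Or.inr ⟨A, v, rfl, rfl, h⟩)⟩

theorem star_lr (P : GSPair) (A : P.S) (v : P.V) :
    (GStar P).Adj (Sum.inl v) (Sum.inr A) ↔ v ∈ A.1 := by
  rw [SimpleGraph.adj_comm, star_rl]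

theorem star_rr (P : GSPair) (A B : P.S) : (GStar P).Adj (Sum.inr A) (Sum.inr B) ↔ False := by
  simp [GStar, SimpleGraph.fromRel_adj]

section
variable (P : GSPair)
theorem n_oo (u v : P.V) : (NEXT P).G.Adj (Sum.inl u) (Sum.inl v) ↔ P.G.Adj u v := by
  simp only [NEXT, SimpleGraph.fromRel_adj]
  simp
  constructor
  · rintro ⟨-, h | h⟩
    · exact h
    · exact h.symm
  · exact fun h => ⟨h.ne, Or.inl h⟩

theorem n_oc (u : P.V) (s : P.S) (v : P.V) :
    (NEXT P).G.Adj (Sum.inl u) (Sum.inr (Sum.inl (s, v))) ↔ False := by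
  simp [NEXT, SimpleGraph.fromRel_adj]

theorem n_ov (u : P.V) (s t : P.S) :
    (NEXT P).G.Adj (Sum.inl u) (Sum.inr (Sum.inr (s, t))) ↔ False := by
  simp [NEXT, SimpleGraph.fromRel_adj]

theorem n_cc (s s' : P.S) (u v : P.V) :
    (NEXT P).G.Adj (Sum.inr (Sum.inl (s, u))) (Sum.inr (Sum.inl (s', v))) ↔
      s = s' ∧ P.G.Adj u v := by
  simp only [NEXT, SimpleGraph.fromRel_adj]
  constructor
  · rintro ⟨-, (⟨a, b, h1, -⟩ | ⟨a, b, c, h1, h2, h⟩ | ⟨a, b, c, h1, -⟩) |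
      (⟨a, b, h1, -⟩ | ⟨a, b, c, h1, h2, h⟩ | ⟨a, b, c, h1, -⟩)⟩
    · cases h1
    · cases h1; cases h2; exact ⟨rfl, h⟩
    · cases h1
    · cases h1
    · cases h1; cases h2; exact ⟨rfl, h.symm⟩
    · cases h1
  · rintro ⟨rfl, h⟩
    refine ⟨fun e => h.ne ?_, Or.inl (Or.inr (Or.inl ⟨s, u, v, rfl, rfl, h⟩))⟩
    cases e; rfl

theorem n_vc (s s' t : P.S) (v : P.V) :
    (NEXT P).G.Adj (Sum.inr (Sum.inr (s, t))) (Sum.inr (Sum.inl (s', v))) ↔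
      s = s' ∧ v ∈ t.1 := by
  simp only [NEXT, SimpleGraph.fromRel_adj]
  constructor
  · rintro ⟨-, (⟨a, b, h1, -⟩ | ⟨a, b, c, h1, h2, h⟩ | ⟨a, b, c, h1, h2, h⟩) |
      (⟨a, b, h1, -⟩ | ⟨a, b, c, h1, h2, h⟩ | ⟨a, b, c, h1, -⟩)⟩
    · cases h1
    · cases h1
    · cases h1; cases h2; exact ⟨rfl, h⟩
    · cases h1
    · cases h2
    · cases h1
  · rintro ⟨rfl, h⟩
    exact ⟨by simp, Or.inl (Or.inr (Or.inr ⟨s, t, v, rfl, rfl, h⟩))⟩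

theorem n_vv (s s' t t' : P.S) :
    (NEXT P).G.Adj (Sum.inr (Sum.inr (s, t))) (Sum.inr (Sum.inr (s', t'))) ↔ False := by
  simp [NEXT, SimpleGraph.fromRel_adj]

def nO (u : P.V) : (NEXT P).V := Sum.inl u
def nC (s : P.S) (u : P.V) : (NEXT P).V := Sum.inr (Sum.inl (s, u))
def nN (s t : P.S) : (NEXT P).V := Sum.inr (Sum.inr (s, t))

theorem n_cases (y : (NEXT P).V) : (∃ u, y = nO P u) ∨ (∃ s u, y = nC P s u) ∨
    (∃ s t, y = nN P s t) := by
  rcases y with y | ⟨s, u⟩ | ⟨s, t⟩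
  · exact Or.inl ⟨y, rfl⟩
  · exact Or.inr (Or.inl ⟨s, u, rfl⟩)
  · exact Or.inr (Or.inr ⟨s, t, rfl⟩)

theorem m_oo (u v : P.V) : (NEXT P).G.Adj (nO P u) (nO P v) ↔ P.G.Adj u v := n_oo P u v
theorem m_cc (s s' : P.S) (u v : P.V) :
    (NEXT P).G.Adj (nC P s u) (nC P s' v) ↔ s = s' ∧ P.G.Adj u v := n_cc P s s' u v
theorem m_vc (s s' t : P.S) (v : P.V) :
    (NEXT P).G.Adj (nN P s t) (nC P s' v) ↔ s = s' ∧ v ∈ t.1 := n_vc P s s' t v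
theorem m_vv (s s' t t' : P.S) :
    (NEXT P).G.Adj (nN P s t) (nN P s' t') ↔ False := n_vv P s s' t t'
theorem m_co (u : P.V) (s : P.S) (v : P.V) : (NEXT P).G.Adj (nC P s v) (nO P u) ↔ False :=
  ⟨fun h => (n_oc P u s v).1 h.symm, False.elim⟩
theorem m_vo (u : P.V) (s t : P.S) : (NEXT P).G.Adj (nN P s t) (nO P u) ↔ False :=
  ⟨fun h => (n_ov P u s t).1 h.symm, False.elim⟩
theorem m_cv (s s' t : P.S) (v : P.V) :
    (NEXT P).G.Adj (nC P s' v) (nN P s t) ↔ s = s' ∧ v ∈ t.1 := by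
  rw [SimpleGraph.adj_comm, m_vc]

theorem sets0 {V S : Type} (A : Set (V ⊕ ((S × V) ⊕ (S × S)))) (φ : S → Set V) (s t : S)
    (h : A = Sum.inl '' (φ s) ∪ (fun u => Sum.inr (Sum.inl (s, u))) '' (φ t) ∨
      A = insert (Sum.inr (Sum.inr (s, t))) (Sum.inl '' (φ s))) : ∃ k : Prop,
    (∀ u, (Sum.inl u ∈ A ↔ u ∈ φ s)) ∧
    (∀ s' u, (Sum.inr (Sum.inl (s', u)) ∈ A ↔ k ∧ s' = s ∧ u ∈ φ t)) ∧
    (∀ s' t', (Sum.inr (Sum.inr (s', t')) ∈ A ↔ ¬ k ∧ s' = s ∧ t' = t)) := by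
  rcases h with h | h
  · refine ⟨True, ?_, ?_, ?_⟩ <;> subst h
    · simp
    · intro s' u
      simp only [Set.mem_union, Set.mem_image, true_and]
      constructor
      · rintro (⟨x, -, h⟩ | ⟨x, hx, h⟩)
        · cases h
        · cases h; exact ⟨rfl, hx⟩
      · rintro ⟨rfl, hu⟩
        exact Or.inr ⟨u, hu, rfl⟩
    · simp
  · refine ⟨False, ?_, ?_, ?_⟩ <;> subst h <;> simp

theorem sets (A : (NEXT P).S) : ∃ (s t : P.S) (k : Prop),
    (∀ u, (nO P u ∈ A.1 ↔ u ∈ s.1)) ∧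
    (∀ s' u, (nC P s' u ∈ A.1 ↔ k ∧ s' = s ∧ u ∈ t.1)) ∧
    (∀ s' t', (nN P s' t' ∈ A.1 ↔ ¬ k ∧ s' = s ∧ t' = t)) := by
  obtain ⟨A, s, t, h⟩ := A
  exact ⟨s, t, sets0 A (fun s : P.S => s.1) s t h⟩

def fV : (NEXT P).V → P.V ⊕ P.S
  | Sum.inl u => Sum.inl u
  | Sum.inr (Sum.inl (_, u)) => Sum.inl u
  | Sum.inr (Sum.inr (_, t)) => Sum.inr t
end

theorem star_cases (P : GSPair) (y : (NEXT P).V ⊕ (NEXT P).S) :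
    (∃ u, y = Sum.inl (nO P u)) ∨ (∃ s u, y = Sum.inl (nC P s u)) ∨
    (∃ s t, y = Sum.inl (nN P s t)) ∨ (∃ A, y = Sum.inr A) := by
  rcases y with y | A
  · rcases n_cases P y with ⟨u, rfl⟩ | ⟨s, u, rfl⟩ | ⟨s, t, rfl⟩
    · exact Or.inl ⟨u, rfl⟩
    · exact Or.inr (Or.inl ⟨s, u, rfl⟩)
    · exact Or.inr (Or.inr (Or.inl ⟨s, t, rfl⟩))
  · exact Or.inr (Or.inr (Or.inr ⟨A, rfl⟩))

theorem clean_next (P : GSPair) (h : CleanOn (GStar P) Set.univ (Set.range Sum.inr)) :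
    CleanOn (GStar (NEXT P)) Set.univ (Set.range Sum.inr) := by
  choose σ τ κ h1 h2 h3 using sets P
  let B : P.S → Set ((NEXT P).V ⊕ (NEXT P).S) := fun s =>
    {a | (∃ u, a = Sum.inl (nC P s u)) ∨
      (∃ t, a = Sum.inl (nN P s t))}
  let X : P.S → Set ((NEXT P).V ⊕ (NEXT P).S) := fun s => {a | ∃ A, a = Sum.inr A ∧ σ A = s}
  let f : ((NEXT P).S → P.S) → ((NEXT P).V ⊕ (NEXT P).S) → (P.V ⊕ P.S) := fun g a =>
    Sum.elim (fV P) (fun A => Sum.inr (g A)) a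
  refine CleanOn.join B X ?_ ?_ ?_ ?_ ?_ ?_
  · rintro s a ⟨A, rfl, -⟩
    exact ⟨A, rfl⟩
  · rintro s b hb ⟨A, rfl⟩
    rcases hb with ⟨u, hb⟩ | ⟨u, hb⟩ <;> cases hb
  · rintro s b (⟨u, rfl⟩ | ⟨t, rfl⟩) y hy
    · obtain ⟨y, rfl⟩ | ⟨s', y, rfl⟩ | ⟨s', t', rfl⟩ | ⟨A, rfl⟩ := star_cases P y
      · rw [star_ll, m_co] at hy; exact hy.elim
      · rw [star_ll, m_cc] at hy
        exact Or.inl (Or.inl ⟨y, by rw [hy.1]⟩)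
      · rw [star_ll, m_cv] at hy
        exact Or.inl (Or.inr ⟨t', by rw [hy.1]⟩)
      · rw [star_lr, h2] at hy
        exact Or.inr ⟨A, rfl, hy.2.1.symm⟩
    · obtain ⟨y, rfl⟩ | ⟨s', y, rfl⟩ | ⟨s', t', rfl⟩ | ⟨A, rfl⟩ := star_cases P y
      · rw [star_ll, m_vo] at hy; exact hy.elim
      · rw [star_ll, m_vc] at hy
        exact Or.inl (Or.inl ⟨y, by rw [hy.1]⟩)
      · rw [star_ll, m_vv] at hy; exact hy.elim
      · rw [star_lr, h3] at hy
        exact Or.inr ⟨A, rfl, hy.2.1.symm⟩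
  · rintro s x ⟨A, rfl, hA⟩ x' ⟨A', rfl, hA'⟩ y hyB hy
    obtain ⟨y, rfl⟩ | ⟨s', y, rfl⟩ | ⟨s', t', rfl⟩ | ⟨A, rfl⟩ := star_cases P y
    · rw [star_rl, h1] at hy ⊢
      rwa [hA', ← hA]
    · rw [star_rl, h2] at hy
      exact (hyB (Or.inl ⟨y, by rw [hy.2.1, hA]⟩)).elim
    · rw [star_rl, h3] at hy
      exact (hyB (Or.inr ⟨t', by rw [hy.2.1, hA]⟩)).elim
    · rw [star_rr] at hy; exact hy.elim
  · refine CleanOn.pull h (f σ) ?_ ?_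
    · intro a ha b hb
      obtain ⟨a, rfl⟩ | ⟨s, a, rfl⟩ | ⟨s, t, rfl⟩ | ⟨A, rfl⟩ := star_cases P a
      · obtain ⟨b, rfl⟩ | ⟨s', b, rfl⟩ | ⟨s', t', rfl⟩ | ⟨A', rfl⟩ := star_cases P b
        · rw [star_ll, m_oo]; exact (star_ll P a b).symm
        · exact (hb s' (Or.inl ⟨_, rfl⟩)).elim
        · exact (hb s' (Or.inr ⟨_, rfl⟩)).elim
        · rw [star_lr, h1]; exact (star_lr P _ _).symm
      · exact (ha s (Or.inl ⟨_, rfl⟩)).elim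
      · exact (ha s (Or.inr ⟨_, rfl⟩)).elim
      · obtain ⟨b, rfl⟩ | ⟨s', b, rfl⟩ | ⟨s', t', rfl⟩ | ⟨A', rfl⟩ := star_cases P b
        · rw [star_rl, h1]; exact (star_rl P _ _).symm
        · exact (hb s' (Or.inl ⟨_, rfl⟩)).elim
        · exact (hb s' (Or.inr ⟨_, rfl⟩)).elim
        · rw [star_rr]; exact (star_rr P _ _).symm
    · rintro a - ⟨A, rfl⟩
      exact ⟨σ A, rfl⟩
  · intro s
    let X₁ : Set ((NEXT P).V ⊕ (NEXT P).S) := {a | ∃ A, a = Sum.inr A ∧ σ A = s ∧ κ A}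
    let N : Set ((NEXT P).V ⊕ (NEXT P).S) := {a | ∃ A, a = Sum.inr A ∧ σ A = s ∧ ¬ κ A}
    let T : Set ((NEXT P).V ⊕ (NEXT P).S) :=
      X₁ ∪ {a | ∃ t, a = Sum.inl (nN P s t)}
    have hc : CleanOn (GStar (NEXT P)) (B s ∪ X₁) T := by
      refine CleanOn.pull h (f τ) ?_ ?_
      · rintro a ((⟨u, rfl⟩ | ⟨t, rfl⟩) | ⟨A, rfl, hA, hk⟩) b ((⟨u', rfl⟩ | ⟨t', rfl⟩) | ⟨A', rfl, hA', hk'⟩)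
        · rw [star_ll, m_cc]; exact (and_iff_right rfl).trans (star_ll P _ _).symm
        · rw [star_ll, m_cv]; exact (and_iff_right rfl).trans (star_lr P _ _).symm
        · rw [star_lr, h2]
          exact ((and_iff_right hk').trans (and_iff_right hA'.symm)).trans (star_lr P _ _).symm
        · rw [star_ll, m_vc]; exact (and_iff_right rfl).trans (star_rl P _ _).symm
        · rw [star_ll, m_vv]; exact (star_rr P _ _).symm
        · rw [star_lr, h3]
          exact ⟨fun hh => (hh.1 hk').elim, fun hh => ((star_rr P _ _).1 hh).elim⟩
        · rw [star_rl, h2]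
          exact ((and_iff_right hk).trans (and_iff_right hA.symm)).trans (star_rl P _ _).symm
        · rw [star_rl, h3]
          exact ⟨fun hh => (hh.1 hk).elim, fun hh => ((star_rr P _ _).1 hh).elim⟩
        · rw [star_rr]; exact (star_rr P _ _).symm
      · rintro a - (⟨A, rfl, -⟩ | ⟨t, rfl⟩)
        · exact ⟨τ A, rfl⟩
        · exact ⟨t, rfl⟩
    have hp : CleanOn (GStar (NEXT P)) (B s ∪ X₁ ∪ N) (X s) := by
      refine hc.pend ?_ ?_
      · rintro b ⟨A, rfl, hA, hk⟩
        refine ⟨Sum.inl (nN P s (τ A)), Or.inr ⟨_, rfl⟩, Or.inl (Or.inr ⟨_, rfl⟩),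
          ?_, ?_⟩
        · rintro ⟨A', e, -⟩
          cases e
        · rintro y (((⟨u, rfl⟩ | ⟨t, rfl⟩) | ⟨A', rfl, -⟩) | ⟨A', rfl, -⟩) hy
          · rw [star_rl, h2] at hy; exact (hk hy.1).elim
          · rw [star_rl, h3] at hy; rw [hy.2.2]
          · rw [star_rr] at hy; exact hy.elim
          · rw [star_rr] at hy; exact hy.elim
      · rintro a ⟨A, rfl, hA⟩
        by_cases hk : κ A
        · exact Or.inr (Or.inl ⟨A, rfl, hA, hk⟩)
        · exact Or.inl ⟨A, rfl, hA, hk⟩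
    refine hp.mono ?_ le_rfl
    rintro a (ha | ⟨A, rfl, hA⟩)
    · exact Or.inl (Or.inl ha)
    · by_cases hk : κ A
      · exact Or.inl (Or.inr ⟨A, rfl, hA, hk⟩)
      · exact Or.inr ⟨A, rfl, hA, hk⟩

theorem clean_burling (k : ℕ) :
    CleanOn (GStar (BurlingPair k)) Set.univ (Set.range Sum.inr) := by
  induction k with
  | zero =>
    have hu : ∀ A A' : (BurlingPair 0).S, A = A' := by
      rintro ⟨A, hA⟩ ⟨A', hA'⟩
      exact Subtype.ext ((Set.mem_singleton_iff.1 hA).trans (Set.mem_singleton_iff.1 hA').symm)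
    have hv : ∀ a a' : (BurlingPair 0).V, a = a' := fun a a' => PUnit.ext a a'
    refine clean_small ?_ ?_
    · rintro (a | a) (b | b) (c | c)
      all_goals first
        | exact Or.inl (congrArg _ (hv _ _))
        | exact Or.inl (congrArg _ (hu _ _))
        | exact Or.inr (Or.inl (congrArg _ (hv _ _)))
        | exact Or.inr (Or.inl (congrArg _ (hu _ _)))
        | exact Or.inr (Or.inr (congrArg _ (hv _ _)))
        | exact Or.inr (Or.inr (congrArg _ (hu _ _)))
    · rintro _ ⟨A, rfl⟩ _ ⟨A', rfl⟩
      rw [hu A A']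
  | succ k ih => exact clean_next _ ih

end BW

/-- **Theorem (Davies).** For every positive integer `k`, the `k`-th Burling graph contains
no induced wheel. -/
theorem burling_no_induced_wheel (k : ℕ) (hk : 0 < k)
    (s : Set (BurlingPair (k - 1)).V) :
    ¬ IsWheel ((BurlingPair (k - 1)).G.induce s) := by
  have h := BW.clean_burling (k - 1)
  refine BW.no_wheel (T := ∅) (BW.CleanOn.pull h Sum.inl ?_ ?_) s
  · intro a _ b _
    exact (BW.star_ll _ a b).symm
  · intro a _ ha
    exact ha.elim
end

section
/- For every positive integer k, there exists a triangle-free graph G that contains no induced wheel and has chromatic number at least k. -/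
universe u

namespace BurlingAux

open Fin.CommRing Fin.NatCast

/-- Abstract Burling structure. -/
structure BSet {V : Type} (lt ar : V → V → Prop) (f : V → ℕ) : Prop where
  irr : ∀ x, ¬ lt x x
  tr : ∀ x y z, lt x y → lt y z → lt x z
  a2 : ∀ x y z, ar x y → ar x z → lt y z ∨ lt z y ∨ y = z
  a3 : ∀ x y z, ar x y → lt x z → lt y z
  a4 : ∀ x y z, ar x y → lt y z → ar x z ∨ lt x z
  rk : ∀ x y, ar x y → f y < f x

variable {V : Type} {lt ar : V → V → Prop} {f : V → ℕ}

/-- Underlying adjacency. -/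
def Ad (ar : V → V → Prop) (x y : V) : Prop := ar x y ∨ ar y x

theorem Ad.symm {x y : V} (h : Ad ar x y) : Ad ar y x := Or.symm h

theorem BSet.exit (B : BSet lt ar f) {x y z : V} (h : lt y z) (ha : Ad ar y x) :
    lt x z ∨ ar x z := by
  rcases ha with ha | ha
  · exact Or.inl (B.a3 _ _ _ ha h)
  · exact (B.a4 _ _ _ ha h).symm

theorem BSet.inc (B : BSet lt ar f) {x y : V} (ha : Ad ar x y) : ¬ lt x y := by
  intro h
  rcases ha with ha | ha
  · exact B.irr _ (B.a3 _ _ _ ha h)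
  · rcases B.a4 _ _ _ ha h with h1 | h1
    · exact lt_irrefl _ (B.rk _ _ h1)
    · exact B.irr _ h1

theorem BSet.asymm (B : BSet lt ar f) {x y : V} (h : lt x y) : ¬ lt y x :=
  fun h' => B.irr _ (B.tr _ _ _ h h')

theorem BSet.aasymm (B : BSet lt ar f) {x y : V} (h : ar x y) : ¬ ar y x :=
  fun h' => lt_asymm (B.rk _ _ h) (B.rk _ _ h')

theorem BSet.tri (B : BSet lt ar f) {x y z : V} (h1 : ar x y) (h2 : ar x z) : ¬ Ad ar y z := by
  intro h
  rcases B.a2 _ _ _ h1 h2 with h3 | h3 | h3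
  · exact B.inc h h3
  · exact B.inc h.symm h3
  · subst h3
    rcases h with h | h <;> exact lt_irrefl _ (B.rk _ _ h)

theorem BSet.noTri (B : BSet lt ar f) {x y z : V} (h1 : Ad ar x y) (h2 : Ad ar x z) :
    ¬ Ad ar y z := by
  intro h
  rcases h1 with h1 | h1
  · rcases h2 with h2 | h2
    · exact B.tri h1 h2 h
    · exact B.tri h2 (h.resolve_left fun h' => by
        have := B.rk _ _ h1; have := B.rk _ _ h2; have := B.rk _ _ h'; omega) (Or.inl h1)
  · rcases h with h | h
    · exact B.tri h1 h h2
    · rcases h2 with h2 | h2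
      · have := B.rk _ _ h1; have := B.rk _ _ h2; have := B.rk _ _ h; omega
      · exact B.tri h2 h (Or.inr h1)

/-- A hole with pivot `v 0 = v n`. -/
structure Hole (lt ar : V → V → Prop) (v : ℕ → V) (n : ℕ) : Prop where
  n4 : 4 ≤ n
  vn : v n = v 0
  inj : ∀ i j, 1 ≤ i → i < j → j < n → v i ≠ v j
  adj : ∀ i j, 1 ≤ i → i < j → j < n → (Ad ar (v i) (v j) ↔ j = i + 1)
  adj0 : ∀ i, 1 ≤ i → i < n → (Ad ar (v 0) (v i) ↔ i = 1 ∨ i + 1 = n)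
  p1 : ar (v 1) (v 0)
  p2 : ar (v (n-1)) (v 0)
  mid : ∀ i, 2 ≤ i → i + 2 ≤ n → lt (v i) (v 0)

theorem Hole.refl {v : ℕ → V} {n : ℕ} (H : Hole lt ar v n) :
    Hole lt ar (fun i => v (n - i)) n := by
  have h4 := H.n4
  refine ⟨H.n4, by simp [H.vn], ?_, ?_, ?_, ?_, ?_, ?_⟩
  · intro i j hi hij hj
    exact (H.inj (n - j) (n - i) (by omega) (by omega) (by omega)).symm
  · intro i j hi hij hj
    have := H.adj (n - j) (n - i) (by omega) (by omega) (by omega)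
    constructor
    · intro h
      have := this.1 h.symm
      omega
    · intro h
      exact (this.2 (by omega)).symm
  · intro i hi hin
    have := H.adj0 (n - i) (by omega) (by omega)
    simp only [Nat.sub_zero, H.vn]
    rw [this]
    omega
  · simpa [H.vn] using H.p2
  · have : n - (n - 1) = 1 := by omega
    simpa [H.vn, this] using H.p1
  · intro i h1 h2
    simpa [H.vn] using H.mid (n - i) (by omega) (by omega)

theorem Hole.nlt1 (B : BSet lt ar f) {v : ℕ → V} {n : ℕ} (H : Hole lt ar v n) {j k : ℕ}
    (hj : 1 ≤ j) (hjk : j < k) (hk : k < n) : ¬ lt (v k) (v j) := by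
  intro h
  have h4 := H.n4
  have hk2 : j + 1 < k := by
    by_contra hc
    have : k = j + 1 := by omega
    exact B.inc ((H.adj j k hj hjk hk).2 this).symm h
  have key : ∀ i, k + i < n → lt (v (k + i)) (v j) := by
    intro i
    induction i with
    | zero => intro _; exact h
    | succ i ih =>
      intro hi
      have h1 := ih (by omega)
      rcases B.exit h1 ((H.adj (k+i) (k+(i+1)) (by omega) (by omega) hi).2 rfl) with h2 | h2
      · exact h2
      · have := (H.adj j (k+(i+1)) hj (by omega) hi).1 (Or.inr h2)
        omega
  have h1 := key (n - 1 - k) (by omega)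
  have e : k + (n - 1 - k) = n - 1 := by omega
  rw [e] at h1
  rcases B.exit h1 ((H.adj0 (n-1) (by omega) (by omega)).2 (by omega)).symm with h2 | h2
  · by_cases hj1 : j = 1
    · subst hj1; exact B.inc (Or.inr H.p1) h2
    · exact B.asymm h2 (H.mid j (by omega) (by omega))
  · have := (H.adj0 j hj (by omega)).1 (Or.inl h2)
    have : j = 1 := by omega
    subst this
    exact B.aasymm h2 H.p1

theorem Hole.nlt (B : BSet lt ar f) {v : ℕ → V} {n : ℕ} (H : Hole lt ar v n) {j k : ℕ}
    (hj : 1 ≤ j) (hj' : j < n) (hk : 1 ≤ k) (hk' : k < n) : ¬ lt (v k) (v j) := by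
  rcases lt_trichotomy j k with h | h | h
  · exact H.nlt1 B hj h hk'
  · subst h; exact B.irr _
  · have := H.refl.nlt1 B (j := n - j) (k := n - k) (by omega) (by omega) (by omega)
    simpa [Nat.sub_sub_self hj'.le, Nat.sub_sub_self hk'.le] using this

/-- no two neighbours of the hub are joined by a directed path -/
theorem Hole.noPath (B : BSet lt ar f) {v : ℕ → V} {n : ℕ} (H : Hole lt ar v n) {w : V}
    (hw : ∀ i, v i ≠ w) (hlt : ∀ k, 1 ≤ k → k < n → ¬ lt w (v k))
    {i j : ℕ} (hi : 1 ≤ i) (hij : i < j) (hj : j < n)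
    (hp : ∀ k, i ≤ k → k < j → ar (v k) (v (k+1)))
    (h1 : Ad ar w (v i)) (h2 : Ad ar w (v j)) : False := by
  rcases h1 with h1 | h1
  · rcases h2 with h2 | h2
    · rcases B.a2 _ _ _ h1 h2 with h | h | h
      · exact H.nlt B (by omega) hj hi (by omega) h
      · exact H.nlt B hi (by omega) (by omega) hj h
      · exact H.inj i j hi hij hj h
    · have key : ∀ d, i + d ≤ j → f (v (i + d)) ≤ f (v i) := by
        intro d
        induction d with
        | zero => intro _; exact le_refl _
        | succ d ih =>
          intro hd
          have := B.rk _ _ (hp (i + d) (by omega) (by omega))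
          have := ih (by omega)
          have e : i + (d + 1) = i + d + 1 := rfl
          rw [e]; omega
      have h3 := key (j - i) (by omega)
      have e : i + (j - i) = j := by omega
      rw [e] at h3
      have := B.rk _ _ h1
      have := B.rk _ _ h2
      omega
  · have h3 : lt (v (i+1)) w := by
      rcases B.a2 _ _ _ h1 (hp i le_rfl hij) with h | h | h
      · exact absurd h (hlt _ (by omega) (by omega))
      · exact h
      · exact absurd h.symm (hw _)
    have key : ∀ d, i + 1 + d ≤ j → lt (v (i + 1 + d)) w := by
      intro d
      induction d with
      | zero => intro _; exact h3
      | succ d ih =>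
        intro hd
        exact B.a3 _ _ _ (hp (i + 1 + d) (by omega) (by omega)) (ih (by omega))
    have h4 := key (j - i - 1) (by omega)
    have e : i + 1 + (j - i - 1) = j := by omega
    rw [e] at h4
    exact B.inc h2.symm h4

theorem Hole.final (B : BSet lt ar f) {v : ℕ → V} {n : ℕ} (H : Hole lt ar v n) {w : V}
    (hw : ∀ i, v i ≠ w) {i1 i2 i3 : ℕ} (h12 : i1 < i2) (h23 : i2 < i3) (h3n : i3 < n)
    (a1 : Ad ar w (v i1)) (a2 : Ad ar w (v i2)) (a3 : Ad ar w (v i3)) : False := by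
  have h4 := H.n4
  by_cases hwz : lt w (v 0)
  · -- main case
    have h1 : 1 ≤ i1 := by
      by_contra hc
      have : i1 = 0 := by omega
      subst this
      exact B.inc a1 hwz
    have hlt : ∀ k, 1 ≤ k → k < n → ¬ lt w (v k) := by
      intro k hk hkn h
      have q : ∀ i, 1 ≤ i → i < n → Ad ar w (v i) → i = k + 1 ∨ k = i + 1 := by
        intro i hi hin ha
        rcases B.exit h ha with h' | h'
        · exact absurd h' (H.nlt B hk hkn hi hin)
        · rcases lt_trichotomy i k with h5 | h5 | h5
          · exact Or.inr ((H.adj i k hi h5 hkn).1 (Or.inl h'))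
          · subst h5; exact absurd (B.rk _ _ h') (lt_irrefl _)
          · exact Or.inl ((H.adj k i hk h5 hin).1 (Or.inr h'))
      have := q i1 (by omega) (by omega) a1
      have := q i2 (by omega) (by omega) a2
      have := q i3 (by omega) (by omega) a3
      omega
    have hedge : ∀ i, 1 ≤ i → i + 1 < n → Ad ar (v i) (v (i+1)) := fun i hi hin =>
      (H.adj i (i+1) hi (by omega) hin).2 rfl
    have hnosrc : ∀ i, 1 ≤ i → i + 2 < n → ar (v (i+1)) (v i) → ar (v (i+1)) (v (i+2)) → False := by
      intro i hi hin g1 g2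
      rcases B.a2 _ _ _ g1 g2 with h | h | h
      · exact H.nlt B (by omega) (by omega) (by omega) (by omega) h
      · exact H.nlt B (by omega) (by omega) (by omega) (by omega) h
      · exact H.inj i (i+2) hi (by omega) (by omega) h
    have right : ∀ i d, 1 ≤ i → i + d + 1 < n → ar (v (i+d)) (v (i+d+1)) → ar (v i) (v (i+1)) := by
      intro i d
      induction d with
      | zero => intro _ _ h; exact h
      | succ d ih =>
        intro hi hin h
        apply ih hi (by omega)
        rcases hedge (i+d) (by omega) (by omega) with g | g
        · exact g
        · exact (hnosrc (i+d) (by omega) (by omega) g h).elim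
    rcases hedge (i2 - 1) (by omega) (by omega) with g | g
    · apply H.noPath B hw hlt h1 h12 (by omega) _ a1 a2
      intro k hk1 hk2
      apply right k (i2 - 1 - k) (by omega) (by omega)
      have e : k + (i2 - 1 - k) = i2 - 1 := by omega
      rw [e]; exact g
    · have hleft : ∀ k, i2 ≤ k → k + 1 < n → ar (v (k+1)) (v k) := by
        intro k hk hkn
        rcases hedge k (by omega) hkn with g' | g'
        · exfalso
          have e : i2 - 1 + (k - (i2 - 1)) = k := by omega
          have := right (i2 - 1) (k - (i2 - 1)) (by omega) (by omega) (by rw [e]; exact g')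
          exact B.aasymm g this
        · exact g'
      apply H.refl.noPath B (w := w) (fun i => hw _) (fun k hk1 hk2 => hlt (n - k) (by omega) (by omega))
        (i := n - i3) (j := n - i2) (by omega) (by omega) (by omega)
      · intro k hk1 hk2
        have := hleft (n - (k+1)) (by omega) (by omega)
        have e : n - (k + 1) + 1 = n - k := by omega
        rw [e] at this
        exact this
      · have e : n - (n - i3) = i3 := by omega
        simpa [e] using a3
      · have e : n - (n - i2) = i2 := by omega
        simpa [e] using a2
  · -- w not below the pivot
    have q : ∀ i, 2 ≤ i → i + 2 ≤ n → Ad ar w (v i) → ar w (v 0) ∧ ar w (v i) := by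
      intro i hi hin ha
      have hm := H.mid i hi hin
      refine ⟨(B.exit hm ha.symm).resolve_left hwz, ha.resolve_right fun h => hwz (B.a3 _ _ _ h hm)⟩
    -- some neighbour in the middle
    have hz : ar w (v 0) := by
      by_cases h : i1 = 0
      · subst h
        by_cases h' : 2 ≤ i2
        · exact (q i2 (by omega) (by omega) a2).1
        · have : i2 = 1 := by omega
          subst this
          exact absurd (Or.inr H.p1) (B.noTri a1 a2)
      · exact (q i2 (by omega) (by omega) a2).1
    have n1 : ¬ Ad ar w (v 1) := fun h => B.noTri (Or.inl hz) h (Or.inr H.p1)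
    have n2 : ¬ Ad ar w (v (n-1)) := fun h => B.noTri (Or.inl hz) h (Or.inr H.p2)
    have r : ∀ i, 1 ≤ i → i < n → Ad ar w (v i) → 2 ≤ i ∧ i + 2 ≤ n := by
      intro i hi hin ha
      constructor
      · by_contra hc
        have : i = 1 := by omega
        subst this; exact n1 ha
      · by_contra hc
        have : i = n - 1 := by omega
        subst this; exact n2 ha
    have r2 := r i2 (by omega) (by omega) a2
    have r3 := r i3 (by omega) (by omega) a3
    rcases B.a2 _ _ _ (q i2 r2.1 r2.2 a2).2 (q i3 r3.1 r3.2 a3).2 with h | h | h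
    · exact H.nlt B (by omega) (by omega) (by omega) (by omega) h
    · exact H.nlt B (by omega) (by omega) (by omega) (by omega) h
    · exact H.inj i2 i3 (by omega) (by omega) (by omega) h

theorem final' (B : BSet lt ar f) {v : ℕ → V} {n : ℕ} (H : Hole lt ar v n) {w : V}
    (hw : ∀ i, v i ≠ w) {a b c : ℕ} (ha : a < n) (hb : b < n) (hc : c < n)
    (hab : a ≠ b) (hac : a ≠ c) (hbc : b ≠ c)
    (a1 : Ad ar w (v a)) (a2 : Ad ar w (v b)) (a3 : Ad ar w (v c)) : False := by
  rcases lt_or_gt_of_ne hab with h1 | h1 <;> rcases lt_or_gt_of_ne hac with h2 | h2 <;>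
    rcases lt_or_gt_of_ne hbc with h3 | h3
  · exact H.final B hw h1 h3 hc a1 a2 a3
  · exact H.final B hw h2 h3 hb a1 a3 a2
  · omega
  · exact H.final B hw h2 h1 hb a3 a1 a2
  · exact H.final B hw h1 h2 hc a2 a1 a3
  · omega
  · exact H.final B hw h3 h2 ha a2 a3 a1
  · exact H.final B hw h3 h1 ha a3 a2 a1

theorem cast_eq {m i j : ℕ} (hi : i < m + 4) (hj : j < m + 4) :
    ((i : Fin (m+4)) = (j : Fin (m+4))) ↔ i = j := by
  constructor
  · intro h
    have := congrArg Fin.val h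
    simpa [Fin.val_natCast, Nat.mod_eq_of_lt hi, Nat.mod_eq_of_lt hj] using this
  · intro h; rw [h]

theorem noWheelCore (B : BSet lt ar f) {m : ℕ} (c : Fin (m+4) → V)
    (cinj : Function.Injective c)
    (cadj : ∀ i j, Ad ar (c i) (c j) ↔ i = j + 1 ∨ j = i + 1)
    (hmid : ar (c 1) (c 0) ∧ ar (c 1) (c 2) ∧ lt (c 2) (c 0))
    {w : V} (hw : ∀ i, c i ≠ w) {i1 i2 i3 : Fin (m+4)}
    (h12 : i1 ≠ i2) (h13 : i1 ≠ i3) (h23 : i2 ≠ i3)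
    (a1 : Ad ar w (c i1)) (a2 : Ad ar w (c i2)) (a3 : Ad ar w (c i3)) : False := by
  obtain ⟨g1, g2, g3⟩ := hmid
  have hn0 : ((m+4 : ℕ) : Fin (m+4)) = ((0:ℕ) : Fin (m+4)) := by simp
  let v : ℕ → V := fun i => c (i : Fin (m+4))
  have hadj : ∀ i j, 1 ≤ i → i < j → j < m+4 → (Ad ar (v i) (v j) ↔ j = i + 1) := by
    intro i j hi hij hj
    simp only [v]
    rw [cadj]
    have e1 : ((j : Fin (m+4)) = (i : Fin (m+4)) + 1) ↔ j = i + 1 := by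
      rw [← Nat.cast_succ, cast_eq hj (by omega)]
    have e2 : ¬ ((i : Fin (m+4)) = (j : Fin (m+4)) + 1) := by
      rw [← Nat.cast_succ]
      by_cases hjj : j + 1 = m + 4
      · rw [Nat.succ_eq_add_one, hjj, hn0, cast_eq (by omega) (by omega)]; omega
      · rw [cast_eq (by omega) (by omega)]; omega
    rw [e1]; simp [e2]
  have hadj0 : ∀ i, 1 ≤ i → i < m+4 → (Ad ar (v 0) (v i) ↔ i = 1 ∨ i + 1 = m+4) := by
    intro i hi hin
    simp only [v]
    rw [cadj]
    have e1 : ((i : Fin (m+4)) = ((0:ℕ) : Fin (m+4)) + 1) ↔ i = 1 := by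
      rw [← Nat.cast_succ, cast_eq hin (by omega)]
    have e2 : (((0:ℕ) : Fin (m+4)) = (i : Fin (m+4)) + 1) ↔ i + 1 = m + 4 := by
      rw [← Nat.cast_succ]
      by_cases hjj : i + 1 = m + 4
      · rw [Nat.succ_eq_add_one, hjj, hn0]; simp
      · rw [cast_eq (by omega) (by omega)]; omega
    rw [e1, e2]; exact or_comm
  have v0 : v 0 = c 0 := by simp [v]
  have v1 : v 1 = c 1 := by simp [v]
  have v2 : v 2 = c 2 := by simp [v]
  rw [← v0, ← v1, ← v2] at *
  have hmid : ∀ d, d ≤ m → lt (v (2 + d)) (v 0) := by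
    intro d
    induction d with
    | zero => intro _; exact g3
    | succ d ih =>
      intro hd
      rcases B.exit (ih (by omega))
        ((hadj (2+d) (2+(d+1)) (by omega) (by omega) (by omega)).2 rfl) with h | h
      · exact h
      · have := (hadj0 (2+(d+1)) (by omega) (by omega)).1 (Or.inr h)
        omega
  have H : Hole lt ar v (m+4) := by
    refine ⟨by omega, by simp only [v]; rw [hn0], ?_, hadj, hadj0, g1, ?_, ?_⟩
    · intro i j hi hij hj h
      have := cinj h
      rw [cast_eq (by omega) hj] at this
      omega
    · have hx : Ad ar (v 0) (v (m+4-1)) := (hadj0 _ (by omega) (by omega)).2 (by omega)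
      rcases B.exit (hmid m le_rfl)
        ((hadj (2+m) (m+4-1) (by omega) (by omega) (by omega)).2 (by omega)) with h | h
      · exact absurd h (B.inc hx.symm)
      · exact h
    · intro i hi hin
      have := hmid (i - 2) (by omega)
      have e : 2 + (i - 2) = i := by omega
      rwa [e] at this
  have cv : ∀ i : Fin (m+4), v i.val = c i := by intro i; simp [v]
  rw [← cv] at a1 a2 a3
  exact final' B H (fun i => hw _) i1.2 i2.2 i3.2 (fun h => h12 (Fin.ext h))
    (fun h => h13 (Fin.ext h)) (fun h => h23 (Fin.ext h)) a1 a2 a3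

theorem noWheel (B : BSet lt ar f) {m : ℕ} (c : Fin (m+4) → V)
    (cinj : Function.Injective c)
    (cadj : ∀ i j, Ad ar (c i) (c j) ↔ i = j + 1 ∨ j = i + 1)
    {w : V} (hw : ∀ i, c i ≠ w) {i1 i2 i3 : Fin (m+4)}
    (h12 : i1 ≠ i2) (h13 : i1 ≠ i3) (h23 : i2 ≠ i3)
    (a1 : Ad ar w (c i1)) (a2 : Ad ar w (c i2)) (a3 : Ad ar w (c i3)) : False := by
  obtain ⟨s, hs⟩ := Finite.exists_max (fun i => f (c i))
  have src : ∀ j, Ad ar (c s) (c j) → ar (c s) (c j) := by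
    intro j h
    refine h.resolve_right fun h' => ?_
    have := B.rk _ _ h'
    have := hs j
    omega
  have r1 := src (s+1) ((cadj _ _).2 (Or.inr rfl))
  have r2 := src (s-1) ((cadj _ _).2 (Or.inl (by simp)))
  have two : (1 : Fin (m+4)) + 1 = 2 := one_add_one_eq_two
  rcases B.a2 _ _ _ r1 r2 with h | h | h
  · have e : s - 1 + 2 = s + 1 := by rw [← two]; abel
    refine noWheelCore B (fun i => c (s - 1 + i)) (fun i j h => by simpa using cinj h) ?_ ?_
      (fun i => hw _) (i1 := i1 - (s - 1)) (i2 := i2 - (s-1)) (i3 := i3 - (s-1))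
      (by simpa using h12) (by simpa using h13) (by simpa using h23)
      (by simpa using a1) (by simpa using a2) (by simpa using a3)
    · intro i j
      simp only [cadj, add_assoc, add_right_inj]
    · simp only [add_zero, sub_add_cancel, e]
      exact ⟨r2, r1, h⟩
  · have e : s + 1 - 2 = s - 1 := by rw [← two]; abel
    refine noWheelCore B (fun i => c (s + 1 - i)) (fun i j h => by simpa using cinj h) ?_ ?_
      (fun i => hw _) (i1 := s + 1 - i1) (i2 := s + 1 - i2) (i3 := s + 1 - i3)
      (by simpa using h12) (by simpa using h13) (by simpa using h23)
      (by simpa using a1) (by simpa using a2) (by simpa using a3)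
    · intro i j
      simp only [cadj]
      have k : ∀ i j : Fin (m+4), s + 1 - i = s + 1 - j + 1 ↔ j = i + 1 := by
        intro i j
        constructor
        · intro h
          have h' : s + 1 - i + (i + j - (s + 1)) = s + 1 - j + 1 + (i + j - (s+1)) := by rw [h]
          have e1 : s + 1 - i + (i + j - (s + 1)) = j := by abel
          have e2 : s + 1 - j + 1 + (i + j - (s+1)) = i + 1 := by abel
          rw [e1, e2] at h'; exact h'
        · rintro rfl; abel
      rw [k, k, or_comm]
    · simp only [sub_zero, add_sub_cancel_right, e]
      exact ⟨r1, r2, h⟩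
  · have := cinj h
    have h' : (1 : Fin (m+4)) + 1 = 0 := by
      have := congrArg (fun x => x - s + 1) this
      simpa using this
    have h3 : ((2 : ℕ) : Fin (m+4)) = ((0 : ℕ) : Fin (m+4)) := by
      rw [Nat.cast_zero, ← h', two]; rfl
    rw [cast_eq (by omega) (by omega)] at h3
    omega

/-- The graph of a Burling structure. -/
def gr (B : BSet lt ar f) : SimpleGraph V where
  Adj := Ad ar
  symm := ⟨fun _ _ h => h.symm⟩
  loopless := ⟨fun x h => by rcases h with h | h <;> exact lt_irrefl _ (B.rk _ _ h)⟩

theorem gr_noWheel (B : BSet lt ar f) (s : Set V) : ¬ IsWheel ((gr B).induce s) := by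
  rintro ⟨w, n, hn, ⟨e⟩, h3⟩
  obtain ⟨m, rfl⟩ : ∃ m, n = m + 4 := ⟨n - 4, by omega⟩
  have hfin : (((gr B).induce s).neighborSet w).Finite := Set.finite_of_ncard_ne_zero (by omega)
  obtain ⟨x, y, z, hx, hy, hz, hxy, hxz, hyz⟩ := (Set.two_lt_ncard_iff hfin).1 h3
  have ne : ∀ x, x ∈ ((gr B).induce s).neighborSet w → x ≠ w := by
    intro x hx h
    subst h
    exact ((gr B).induce s).loopless.irrefl _ hx
  refine noWheel B (fun i => ((e.symm i).1.1 : V)) ?_ ?_ (w := w.1) ?_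
    (i1 := e ⟨x, ne x hx⟩) (i2 := e ⟨y, ne y hy⟩) (i3 := e ⟨z, ne z hz⟩) ?_ ?_ ?_ ?_ ?_ ?_
  · intro i j h
    exact e.symm.injective (Subtype.ext (Subtype.ext h))
  · intro i j
    have h1 := e.symm.map_rel_iff (a := i) (b := j)
    have h2 : (SimpleGraph.cycleGraph (m+4)).Adj i j ↔ i = j + 1 ∨ j = i + 1 := by
      rw [SimpleGraph.cycleGraph_adj, sub_eq_iff_eq_add, sub_eq_iff_eq_add, add_comm 1 j,
        add_comm 1 i]
    rw [← h2, ← h1]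
    rfl
  · intro i h
    exact (e.symm i).2 (Subtype.ext h)
  · intro h; exact hxy (congrArg Subtype.val (e.injective h))
  · intro h; exact hxz (congrArg Subtype.val (e.injective h))
  · intro h; exact hyz (congrArg Subtype.val (e.injective h))
  · show Ad ar w.1 (e.symm (e ⟨x, ne x hx⟩)).1.1
    rw [RelIso.symm_apply_apply]; exact hx
  · show Ad ar w.1 (e.symm (e ⟨y, ne y hy⟩)).1.1
    rw [RelIso.symm_apply_apply]; exact hy
  · show Ad ar w.1 (e.symm (e ⟨z, ne z hz⟩)).1.1
    rw [RelIso.symm_apply_apply]; exact hz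

/-- vertices of the next structure -/
inductive NV (V : Type) (P : Set (Set V)) : Type
  | out (x : V) : NV V P
  | cp (S : P) (x : V) : NV V P
  | nw (S T : P) : NV V P

/-- order of the next structure -/
def nlt (lt : V → V → Prop) (P : Set (Set V)) : NV V P → NV V P → Prop
  | .out x, .out y => lt x y
  | .cp S _, .out y => y ∈ S.1
  | .cp S x, .cp S' x' => S = S' ∧ lt x x'
  | .nw S _, .out y => y ∈ S.1
  | _, _ => False

/-- arcs of the next structure -/
def nar (ar : V → V → Prop) (P : Set (Set V)) : NV V P → NV V P → Prop
  | .out x, .out y => ar x y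
  | .cp S x, .cp S' x' => S = S' ∧ ar x x'
  | .nw S T, .cp S' x => S = S' ∧ x ∈ T.1
  | _, _ => False

/-- rank of the next structure -/
def nrk (f : V → ℕ) (P : Set (Set V)) (k : ℕ) : NV V P → ℕ
  | .out x => f x
  | .cp _ x => f x
  | .nw _ _ => k + 1

/-- probes -/
structure Probe (lt : V → V → Prop) (S : Set V) : Prop where
  chain : ∀ x ∈ S, ∀ y ∈ S, lt x y ∨ lt y x ∨ x = y
  up : ∀ x ∈ S, ∀ y, lt x y → y ∈ S

theorem next_BSet (B : BSet lt ar f) {P : Set (Set V)} (hP : ∀ S ∈ P, Probe lt S) {k : ℕ}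
    (hk : ∀ x, f x ≤ k) : BSet (nlt lt P) (nar ar P) (nrk f P k) := by
  constructor
  · rintro (x | ⟨S, x⟩ | ⟨S, T⟩) h
    · exact B.irr _ h
    · exact B.irr _ h.2
    · exact h
  · rintro (x | ⟨S, x⟩ | ⟨S, T⟩) (y | ⟨S', y⟩ | ⟨S', T'⟩) (z | ⟨S'', z⟩ | ⟨S'', T''⟩) h1 h2 <;>
      simp only [nlt] at h1 h2 ⊢
    · exact B.tr _ _ _ h1 h2
    · exact (hP S.1 S.2).up _ h1 _ h2
    · rw [h1.1]; exact h2
    · exact ⟨h1.1.trans h2.1, B.tr _ _ _ h1.2 h2.2⟩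
    · exact (hP S.1 S.2).up _ h1 _ h2
  · rintro (x | ⟨S, x⟩ | ⟨S, T⟩) (y | ⟨S', y⟩ | ⟨S', T'⟩) (z | ⟨S'', z⟩ | ⟨S'', T''⟩) h1 h2 <;>
      simp only [nlt, nar] at h1 h2 ⊢
    · simpa using B.a2 _ _ _ h1 h2
    · obtain ⟨rfl, h1⟩ := h1
      obtain ⟨rfl, h2⟩ := h2
      simpa using B.a2 _ _ _ h1 h2
    · obtain ⟨rfl, h1⟩ := h1
      obtain ⟨rfl, h2⟩ := h2
      simpa using (hP T.1 T.2).chain _ h1 _ h2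
  · rintro (x | ⟨S, x⟩ | ⟨S, T⟩) (y | ⟨S', y⟩ | ⟨S', T'⟩) (z | ⟨S'', z⟩ | ⟨S'', T''⟩) h1 h2 <;>
      simp only [nlt, nar] at h1 h2 ⊢
    · exact B.a3 _ _ _ h1 h2
    · rw [← h1.1]; exact h2
    · exact ⟨h1.1.symm.trans h2.1, B.a3 _ _ _ h1.2 h2.2⟩
    · rw [← h1.1]; exact h2
  · rintro (x | ⟨S, x⟩ | ⟨S, T⟩) (y | ⟨S', y⟩ | ⟨S', T'⟩) (z | ⟨S'', z⟩ | ⟨S'', T''⟩) h1 h2 <;>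
      simp only [nlt, nar] at h1 h2 ⊢
    · exact B.a4 _ _ _ h1 h2
    · rw [h1.1]; exact Or.inr h2
    · obtain ⟨rfl, h1⟩ := h1
      obtain ⟨rfl, h2⟩ := h2
      simpa using B.a4 _ _ _ h1 h2
    · rw [h1.1]; exact Or.inr h2
    · obtain ⟨rfl, h1⟩ := h1
      obtain ⟨rfl, h2⟩ := h2
      exact Or.inl ⟨rfl, (hP T.1 T.2).up _ h1 _ h2⟩
  · rintro (x | ⟨S, x⟩ | ⟨S, T⟩) (y | ⟨S', y⟩ | ⟨S', T'⟩) h1 <;> simp only [nar, nrk] at h1 ⊢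
    · exact B.rk _ _ h1
    · exact B.rk _ _ h1.2
    · have := hk y; omega

theorem exists_burling (k : ℕ) : ∃ (V : Type) (lt ar : V → V → Prop) (f : V → ℕ) (P : Set (Set V)),
    BSet lt ar f ∧ (∀ S ∈ P, Probe lt S) ∧ (∀ x, f x ≤ k) ∧
    ∀ (m : ℕ) (c : V → Fin m), (∀ x y, ar x y → c x ≠ c y) → ∃ S ∈ P, k ≤ (c '' S).ncard := by
  induction k with
  | zero =>
    refine ⟨Empty, fun _ _ => False, fun _ _ => False, fun _ => 0, {∅}, ?_, ?_, ?_, ?_⟩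
    · constructor <;> simp
    · intro S hS
      constructor <;> simp
    · simp
    · intro m c _
      exact ⟨∅, rfl, by simp⟩
  | succ k ih =>
    obtain ⟨V, lt, ar, f, P, B, hP, hf, hc⟩ := ih
    refine ⟨NV V P, nlt lt P, nar ar P, nrk f P k,
      {A | ∃ S T : P, A = NV.out '' S.1 ∪ NV.cp S '' T.1 ∨ A = insert (NV.nw S T) (NV.out '' S.1)},
      next_BSet B hP hf, ?_, ?_, ?_⟩
    · rintro A ⟨S, T, rfl | rfl⟩
      · constructor
        · rintro _ (⟨x, hx, rfl⟩ | ⟨x, hx, rfl⟩) _ (⟨y, hy, rfl⟩ | ⟨y, hy, rfl⟩) <;>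
            simp only [nlt]
          · simpa using (hP S.1 S.2).chain _ hx _ hy
          · exact Or.inr (Or.inl hx)
          · exact Or.inl hy
          · simpa using (hP T.1 T.2).chain _ hx _ hy
        · rintro _ (⟨x, hx, rfl⟩ | ⟨x, hx, rfl⟩) (y | ⟨S', y⟩ | ⟨S', T'⟩) h <;>
            simp only [nlt] at h
          · exact Or.inl ⟨y, (hP S.1 S.2).up _ hx _ h, rfl⟩
          · exact Or.inl ⟨y, h, rfl⟩
          · obtain ⟨rfl, h⟩ := h
            exact Or.inr ⟨y, (hP T.1 T.2).up _ hx _ h, rfl⟩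
      · constructor
        · rintro _ (rfl | ⟨x, hx, rfl⟩) _ (rfl | ⟨y, hy, rfl⟩) <;> simp only [nlt]
          · simp
          · exact Or.inl hy
          · exact Or.inr (Or.inl hx)
          · simpa using (hP S.1 S.2).chain _ hx _ hy
        · rintro _ (rfl | ⟨x, hx, rfl⟩) (y | ⟨S', y⟩ | ⟨S', T'⟩) h <;> simp only [nlt] at h
          · exact Or.inr ⟨y, h, rfl⟩
          · exact Or.inr ⟨y, (hP S.1 S.2).up _ hx _ h, rfl⟩
    · rintro (x | ⟨S, x⟩ | ⟨S, T⟩) <;> simp only [nrk]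
      · have := hf x; omega
      · have := hf x; omega
      · omega
    · intro m c hcol
      obtain ⟨S, hS, hS'⟩ := hc m (fun x => c (.out x)) (fun x y h => hcol _ _ h)
      obtain ⟨T, hT, hT'⟩ := hc m (fun x => c (.cp ⟨S, hS⟩ x)) (fun x y h => hcol _ _ ⟨rfl, h⟩)
      by_contra hcon
      push Not at hcon
      have h1 := hcon _ ⟨⟨S, hS⟩, ⟨T, hT⟩, Or.inl rfl⟩
      have h2 := hcon _ ⟨⟨S, hS⟩, ⟨T, hT⟩, Or.inr rfl⟩
      simp only [Set.image_union, Set.image_insert_eq, Set.image_image] at h1 h2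
      set CS := (fun x => c (.out x)) '' S with hCS
      set CT := (fun x => c (.cp ⟨S, hS⟩ x)) '' T with hCT
      have e1 : CS = CS ∪ CT :=
        Set.eq_of_subset_of_ncard_le Set.subset_union_left (by omega) (Set.toFinite _)
      have e2 : CT = CS ∪ CT :=
        Set.eq_of_subset_of_ncard_le Set.subset_union_right (by omega) (Set.toFinite _)
      have hn : c (.nw ⟨S, hS⟩ ⟨T, hT⟩) ∉ CS := by
        rw [e1, ← e2]
        rintro ⟨x, hx, h⟩
        exact hcol (.nw ⟨S, hS⟩ ⟨T, hT⟩) (.cp ⟨S, hS⟩ x) ⟨rfl, hx⟩ h.symm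
      rw [Set.ncard_insert_of_notMem hn (Set.toFinite _)] at h2
      omega

end BurlingAux

/-- **Corollary.** For every positive integer `k` there is a triangle-free graph with no
induced wheel and chromatic number at least `k`. -/
theorem exists_triangleFree_no_induced_wheel_chromatic_ge (k : ℕ) (hk : 0 < k) :
    ∃ (V : Type) (G : SimpleGraph V), G.CliqueFree 3 ∧
      (∀ s : Set V, ¬ IsWheel (G.induce s)) ∧ (k : ℕ∞) ≤ G.chromaticNumber := by
  obtain ⟨V, lt, ar, f, P, B, -, -, hc⟩ := BurlingAux.exists_burling k
  refine ⟨V, BurlingAux.gr B, ?_, BurlingAux.gr_noWheel B, ?_⟩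
  · classical
    intro t ht
    obtain ⟨x, y, z, hxy, hxz, hyz, -⟩ := SimpleGraph.is3Clique_iff.1 ht
    exact B.noTri hxy hxz hyz
  · rw [SimpleGraph.le_chromaticNumber_iff_colorable]
    intro m hm
    obtain ⟨C⟩ := hm
    obtain ⟨S, -, hS⟩ := hc m C (fun x y h => C.valid (Or.inl h))
    have := Set.ncard_le_card (C '' S)
    simp at this
    omega
end

section
/- Let (G,T) be a clean graft and let t ∈ T. Then pendent((G,T),t) is a clean graft. -/
universe u

theorem pend_some {V : Type u} (G : SimpleGraph V) (t a b : V) :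
    (pendentGraph G t).Adj (some a) (some b) ↔ G.Adj a b := by
  simp only [pendentGraph, SimpleGraph.fromRel_adj]
  constructor
  · rintro ⟨-, (⟨u, v, h1, h2, h⟩ | ⟨h, -⟩) | (⟨u, v, h1, h2, h⟩ | ⟨h, -⟩)⟩
    · cases h1; cases h2; exact h
    · cases h
    · cases h1; cases h2; exact h.symm
    · cases h
  · intro h
    exact ⟨fun e => h.ne (Option.some.inj e), Or.inl (Or.inl ⟨a, b, rfl, rfl, h⟩)⟩

theorem pend_none {V : Type u} (G : SimpleGraph V) (t : V) (x : Option V) :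
    (pendentGraph G t).Adj none x ↔ x = some t := by
  simp only [pendentGraph, SimpleGraph.fromRel_adj]
  constructor
  · rintro ⟨h0, (⟨u, v, h1, h2, h⟩ | ⟨-, h⟩) | (⟨u, v, h1, h2, h⟩ | ⟨h, h'⟩)⟩
    · cases h1
    · exact h
    · cases h2
    · cases h'
  · rintro rfl
    exact ⟨by simp, Or.inl (Or.inr (by simp))⟩

theorem emb_of_iso {V : Type u} {G : SimpleGraph V} {K : Type} {H : SimpleGraph K}
    (s : Set V) (w : s) (e : (G.induce s).induce {u | u ≠ w} ≃g H) :
    ∃ p : H ↪g G, (∀ k, p k = ((e.symm k).1 : s).1) ∧ (∀ k, p k ≠ w.1) ∧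
      {k | G.Adj w.1 (p k)}.ncard = ((G.induce s).neighborSet w).ncard := by
  let p : H ↪g G := (e.symm.toEmbedding.trans (SimpleGraph.Embedding.induce _)).trans
    (SimpleGraph.Embedding.induce _)
  have hp : ∀ k, p k = ((e.symm k).1 : s).1 := fun k => rfl
  refine ⟨p, hp, ?_, ?_⟩
  · intro k h
    exact (e.symm k).2 (Subtype.ext h)
  · refine Set.ncard_congr (fun k _ => (e.symm k).1) ?_ ?_ ?_
    · intro k hk
      exact hk
    · intro a b _ _ h
      exact e.symm.injective (Subtype.ext h)
    · intro b hb
      have hne : b ≠ w := fun h => (G.induce s).ne_of_adj hb h.symm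
      refine ⟨e ⟨b, hne⟩, ?_, ?_⟩
      · show G.Adj w.1 (p _)
        rw [hp, e.symm_apply_apply]
        exact hb
      · show (e.symm (e ⟨b, hne⟩)).1 = b
        rw [e.symm_apply_apply]

theorem iso_of_emb {V : Type u} {G : SimpleGraph V} {K : Type} {H : SimpleGraph K}
    (p : H ↪g G) (f : V) (hf : ∀ k, p k ≠ f) :
    ∃ (s : Set V) (w : s) (e : (G.induce s).induce {u | u ≠ w} ≃g H), 
      (∀ k, ((e.symm k).1 : s).1 = p k) ∧ 
      {k | G.Adj f (p k)}.ncard = ((G.induce s).neighborSet w).ncard := by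
  let s : Set V := insert f (Set.range p)
  let w : s := ⟨f, Set.mem_insert _ _⟩
  let g : K → {u : s // u ≠ w} := fun k => ⟨⟨p k, Set.mem_insert_of_mem _ ⟨k, rfl⟩⟩,
    fun h => hf k (congrArg Subtype.val h)⟩
  have hg : Function.Bijective g := by
    constructor
    · intro a b h
      exact p.injective (congrArg (fun x => x.1.1) h)
    · rintro ⟨⟨x, hx⟩, hne⟩
      rcases hx with rfl | ⟨k, rfl⟩
      · exact absurd rfl hne
      · exact ⟨k, rfl⟩
  let e' : H ≃g (G.induce s).induce {u | u ≠ w} :=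
    ⟨Equiv.ofBijective g hg, by intro a b; exact p.map_rel_iff⟩
  have h1 : ∀ k, ((e'.symm.symm k).1 : s).1 = p k := fun k => rfl
  refine ⟨s, w, e'.symm, h1, ?_⟩
  obtain ⟨q, hq, -, hc⟩ := emb_of_iso s w e'.symm
  rw [← hc]
  have : ∀ k, q k = p k := fun k => (hq k).trans (h1 k)
  simp only [this]
  rfl

theorem wheel_iff {V : Type u} (G : SimpleGraph V) :
    (∃ s : Set V, IsWheel (G.induce s)) ↔
    ∃ (n : ℕ) (p : SimpleGraph.cycleGraph n ↪g G) (f : V), 4 ≤ n ∧ (∀ k, p k ≠ f) ∧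
      3 ≤ {k | G.Adj f (p k)}.ncard := by
  constructor
  · rintro ⟨s, w, n, hn, ⟨e⟩, h3⟩
    obtain ⟨p, -, h, hc⟩ := emb_of_iso s w e
    exact ⟨n, p, w, hn, h, hc ▸ h3⟩
  · rintro ⟨n, p, f, hn, h, h3⟩
    obtain ⟨s, w, e, -, hc⟩ := iso_of_emb p f h
    exact ⟨s, w, n, hn, ⟨e⟩, hc ▸ h3⟩

theorem fan_iff {V : Type u} (G : SimpleGraph V) (T : Set V) :
    (∃ s : Set V, IsGuardedFan (G.induce s) (Subtype.val ⁻¹' T)) ↔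
    ∃ (n : ℕ) (p : SimpleGraph.pathGraph (n + 1) ↪g G) (f : V), (∀ k, p k ≠ f) ∧
      3 ≤ {k | G.Adj f (p k)}.ncard ∧ p 0 ∈ T ∧ p (Fin.last n) ∈ T := by
  constructor
  · rintro ⟨s, w, n, e, h3, h0, hl⟩
    obtain ⟨p, hp, h, hc⟩ := emb_of_iso s w e
    refine ⟨n, p, w, h, hc ▸ h3, ?_, ?_⟩
    · rw [hp]; exact h0
    · rw [hp]; exact hl
  · rintro ⟨n, p, f, h, h3, h0, hl⟩
    obtain ⟨s, w, e, he, hc⟩ := iso_of_emb p f h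
    refine ⟨s, w, n, e, hc ▸ h3, ?_, ?_⟩
    · rw [Set.mem_preimage, he]; exact h0
    · rw [Set.mem_preimage, he]; exact hl

theorem mount_iff {V : Type u} (G : SimpleGraph V) (T : Set V) :
    (∃ s : Set V, IsMountablePath (G.induce s) (Subtype.val ⁻¹' T)) ↔
    ∃ (n : ℕ) (p : SimpleGraph.pathGraph n ↪g G), 3 ≤ {k | p k ∈ T}.ncard := by
  constructor
  · rintro ⟨s, ⟨n, ⟨e⟩⟩, h3⟩
    let p : SimpleGraph.pathGraph n ↪g G :=
      e.symm.toEmbedding.trans (SimpleGraph.Embedding.induce _)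
    refine ⟨n, p, h3.trans (le_of_eq ?_)⟩
    refine Set.ncard_congr (fun k _ => e k) ?_ ?_ ?_
    · intro a ha
      show (e.symm (e a)).1 ∈ T
      rw [e.symm_apply_apply]; exact ha
    · intro a b _ _ h
      exact e.injective h
    · intro b hb
      exact ⟨e.symm b, hb, e.apply_symm_apply b⟩
  · rintro ⟨n, p, h3⟩
    let e : SimpleGraph.pathGraph n ≃g G.induce (Set.range p) :=
      ⟨Equiv.ofInjective p p.injective, by intro a b; exact p.map_rel_iff⟩
    refine ⟨Set.range p, ⟨n, ⟨e.symm⟩⟩, h3.trans (le_of_eq ?_)⟩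
    refine Set.ncard_congr (fun k _ => e k) ?_ ?_ ?_
    · intro a ha
      exact ha
    · intro a b _ _ h
      exact e.injective h
    · intro b hb
      refine ⟨e.symm b, ?_, e.apply_symm_apply b⟩
      have : p (e.symm b) = b.1 := congrArg Subtype.val (e.apply_symm_apply b)
      show p (e.symm b) ∈ T
      rw [this]; exact hb

theorem pull {V : Type u} {G : SimpleGraph V} {t : V} {K : Type} {H : SimpleGraph K}
    (p : H ↪g pendentGraph G t) (h : ∀ k, p k ≠ none) :
    ∃ q : H ↪g G, ∀ k, p k = some (q k) := by
  choose q hq using fun k => Option.ne_none_iff_exists'.mp (h k)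
  refine ⟨⟨⟨q, ?_⟩, ?_⟩, hq⟩
  · intro a b hab
    apply p.injective
    rw [hq, hq, hab]
  · intro a b
    rw [← p.map_rel_iff]
    show G.Adj (q a) (q b) ↔ (pendentGraph G t).Adj (p a) (p b)
    rw [hq, hq, pend_some]

theorem pull_path {V : Type u} {G : SimpleGraph V} {t : V} {n : ℕ}
    (p : SimpleGraph.pathGraph (n + 2) ↪g pendentGraph G t) (h : ∃ k, p k = none) :
    ∃ (q : SimpleGraph.pathGraph (n + 2) ↪g pendentGraph G t)
      (r : SimpleGraph.pathGraph (n + 1) ↪g G),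
      ((∀ k, q k = p k) ∨ (∀ k, q k = p k.rev)) ∧ q 0 = none ∧ r 0 = t ∧
      ∀ k, q (Fin.succ k) = some (r k) := by
  obtain ⟨i, hi⟩ := h
  have nb : ∀ j, (SimpleGraph.pathGraph (n + 2)).Adj i j → p j = some t := by
    intro j hj
    rw [← pend_none G t, ← hi]
    exact p.map_rel_iff.mpr hj
  have hend : i = 0 ∨ i = Fin.last (n + 1) := by
    by_contra! hc
    obtain ⟨h0, hl⟩ := hc
    have h0' : i.val ≠ 0 := fun h => h0 (Fin.ext h)
    have hl' : i.val ≠ n + 1 := fun h => hl (Fin.ext h)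
    have hlt := i.isLt
    have e1 := nb ⟨i.val - 1, by omega⟩ (by rw [SimpleGraph.pathGraph_adj]; right; simp; omega)
    have e2 := nb ⟨i.val + 1, by omega⟩ (by rw [SimpleGraph.pathGraph_adj]; left; simp)
    have := congrArg Fin.val (p.injective (e1.trans e2.symm))
    simp at this
  have key : ∃ q : SimpleGraph.pathGraph (n + 2) ↪g pendentGraph G t,
      ((∀ k, q k = p k) ∨ (∀ k, q k = p k.rev)) ∧ q 0 = none := by
    rcases hend with rfl | rfl
    · exact ⟨p, Or.inl fun _ => rfl, hi⟩
    · let R : SimpleGraph.pathGraph (n + 2) ↪g SimpleGraph.pathGraph (n + 2) :=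
        ⟨⟨Fin.rev, Fin.rev_injective⟩, by
          intro a b
          have := a.isLt
          have := b.isLt
          simp only [SimpleGraph.pathGraph_adj, Function.Embedding.coeFn_mk, Fin.val_rev]
          omega⟩
      have hR : ∀ k, R k = k.rev := fun _ => rfl
      refine ⟨R.trans p, Or.inr fun _ => rfl, ?_⟩
      show p (R 0) = none
      rw [hR, Fin.rev_zero, hi]
  obtain ⟨q, hq, hq0⟩ := key
  let S : SimpleGraph.pathGraph (n + 1) ↪g SimpleGraph.pathGraph (n + 2) :=
    ⟨⟨Fin.succ, Fin.succ_injective _⟩, by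
      intro a b
      simp only [SimpleGraph.pathGraph_adj, Function.Embedding.coeFn_mk, Fin.val_succ]
      omega⟩
  obtain ⟨r, hr⟩ := pull (S.trans q) (by
    intro k hk
    have : q (Fin.succ k) = q 0 := hk.trans hq0.symm
    exact Fin.succ_ne_zero k (q.injective this))
  refine ⟨q, r, hq, hq0, ?_, hr⟩
  have h1 : (pendentGraph G t).Adj (q 0) (q (Fin.succ 0)) :=
    q.map_rel_iff.mpr (by rw [SimpleGraph.pathGraph_adj]; left; simp)
  rw [hq0, pend_none] at h1
  exact Option.some.inj ((hr 0).symm.trans h1)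

theorem ncard_fin_le {n : ℕ} (s : Set (Fin n)) : s.ncard ≤ n := by
  have := Set.ncard_le_ncard (Set.subset_univ s)
  simpa [Set.ncard_univ] using this

theorem mem_pendT {V : Type u} (T : Set V) (t x : V) :
    some x ∈ pendentT T t ↔ x ∈ T ∧ x ≠ t := by
  simp [pendentT]

theorem pendent_isCleanGraft {V : Type u} (G : SimpleGraph V) (T : Set V)
    (h : IsCleanGraft G T) (t : V) (ht : t ∈ T) :
    IsCleanGraft (pendentGraph G t) (pendentT T t) := by
  classical
  obtain ⟨hC, hS, hW, hF, hM⟩ := h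
  have hW' := (not_congr (wheel_iff G)).mp (not_exists.mpr hW)
  have hF' := (not_congr (fan_iff G T)).mp (not_exists.mpr hF)
  have hM' := (not_congr (mount_iff G T)).mp (not_exists.mpr hM)
  refine ⟨?_, ?_, ?_, ?_, ?_⟩
  · intro s hs
    rw [SimpleGraph.is3Clique_iff] at hs
    obtain ⟨a, b, c, hab, hac, hbc, -⟩ := hs
    have tri : ∀ x y, (pendentGraph G t).Adj none x → (pendentGraph G t).Adj none y →
        ¬ (pendentGraph G t).Adj x y := by
      intro x y hx hy hxy
      rw [pend_none] at hx hy
      exact hxy.ne (hx.trans hy.symm)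
    rcases a with _ | a
    · exact tri _ _ hab hac hbc
    rcases b with _ | b
    · exact tri _ _ hab.symm hbc hac
    rcases c with _ | c
    · exact tri _ _ hac.symm hbc.symm hab
    rw [pend_some] at hab hac hbc
    exact hC {a, b, c} (SimpleGraph.is3Clique_iff.mpr ⟨a, b, c, hab, hac, hbc, rfl⟩)
  · intro u hu v hv huv
    rcases u with _ | u
    · rw [pend_none] at huv
      subst huv
      exact ((mem_pendT T t t).mp hv).2 rfl
    rcases v with _ | v
    · have := huv.symm
      rw [pend_none] at this
      exact ((mem_pendT T t u).mp hu).2 (Option.some.inj this)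
    rw [pend_some] at huv
    exact hS u ((mem_pendT T t u).mp hu).1 v ((mem_pendT T t v).mp hv).1 huv
  · rw [← not_exists, wheel_iff]
    rintro ⟨n, p, f, hn, hf, h3⟩
    apply hW'
    have hnn : ∀ k, p k ≠ none := by
      intro k hk
      obtain ⟨m, rfl⟩ : ∃ m, n = m + 3 := ⟨n - 3, by omega⟩
      have nb : ∀ j, (SimpleGraph.cycleGraph (m + 3)).Adj k j → p j = some t := by
        intro j hj
        rw [← pend_none G t, ← hk]
        exact p.map_rel_iff.mpr hj
      have hd := SimpleGraph.cycleGraph_degree_three_le (n := m) (v := k)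
      have : ((SimpleGraph.cycleGraph (m + 3)).neighborFinset k).card ≤ 1 := by
        rw [Finset.card_le_one]
        intro a ha b hb
        rw [SimpleGraph.mem_neighborFinset] at ha hb
        exact p.injective ((nb a ha).trans (nb b hb).symm)
      rw [SimpleGraph.card_neighborFinset_eq_degree] at this
      omega
    obtain ⟨q, hq⟩ := pull p hnn
    rcases f with _ | f
    · exfalso
      have : {k | (pendentGraph G t).Adj none (p k)}.ncard ≤ 1 := by
        rw [Set.ncard_le_one]
        intro a ha b hb
        have ha' := (pend_none _ _ _).mp ha
        have hb' := (pend_none _ _ _).mp hb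
        exact p.injective (ha'.trans hb'.symm)
      omega
    · refine ⟨n, q, f, hn, ?_, ?_⟩
      · intro k hk
        exact hf k (by rw [hq, hk])
      · simpa only [hq, pend_some] using h3
  · rw [← not_exists, fan_iff]
    rintro ⟨n, p, f, hf, h3, h0, hl⟩
    apply hF'
    rcases f with _ | f
    · exfalso
      have : {k | (pendentGraph G t).Adj none (p k)}.ncard ≤ 1 := by
        rw [Set.ncard_le_one]
        intro a ha b hb
        have ha' := (pend_none _ _ _).mp ha
        have hb' := (pend_none _ _ _).mp hb
        exact p.injective (ha'.trans hb'.symm)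
      omega
    by_cases hnn : ∃ k, p k = none
    · have := h3.trans (ncard_fin_le _)
      obtain ⟨m, rfl⟩ : ∃ m, n = m + 1 := ⟨n - 1, by omega⟩
      obtain ⟨q, r, hqp, hq0, hr0, hr⟩ := pull_path p hnn
      have hqf : ∀ k, q k ≠ some f := by
        rcases hqp with hqp | hqp
        · intro k; rw [hqp]; exact hf k
        · intro k; rw [hqp]; exact hf _
      have hql : q (Fin.last (m + 1)) ∈ pendentT T t := by
        rcases hqp with hqp | hqp
        · rw [hqp]; exact hl
        · rw [hqp, Fin.rev_last]; exact h0
      have hrf : ∀ k, r k ≠ f := by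
        intro k hk
        exact hqf _ ((hr k).trans (congrArg some hk))
      have hq3 : 3 ≤ {k | (pendentGraph G t).Adj (some f) (q k)}.ncard := by
        rcases hqp with hqp | hqp
        · simpa only [hqp] using h3
        · refine h3.trans (Set.ncard_le_ncard_of_injOn Fin.rev ?_ Fin.rev_injective.injOn)
          intro k hk
          show (pendentGraph G t).Adj (some f) (q _)
          rw [hqp, Fin.rev_rev]
          exact hk
      refine ⟨m, r, f, hrf, ?_, ?_, ?_⟩
      · refine hq3.trans ?_
        rw [← Set.ncard_image_of_injective _ (Fin.succ_injective (m + 1))]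
        refine Set.ncard_le_ncard ?_ (Set.toFinite _)
        intro k hk
        rw [Set.mem_ofPred_eq] at hk
        induction k using Fin.cases with
        | zero =>
          exfalso
          rw [hq0] at hk
          have := (pend_none _ _ _).mp hk.symm
          exact hrf 0 (hr0.trans (Option.some.inj this).symm)
        | succ j =>
          refine ⟨j, ?_, rfl⟩
          rw [hr, pend_some] at hk
          exact hk
      · rw [hr0]; exact ht
      · rw [← Fin.succ_last, hr, mem_pendT] at hql
        exact hql.1
    · obtain ⟨q, hq⟩ := pull p (not_exists.mp hnn)
      refine ⟨n, q, f, ?_, ?_, ?_, ?_⟩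
      · intro k hk
        exact hf k (by rw [hq, hk])
      · simpa only [hq, pend_some] using h3
      · rw [hq, mem_pendT] at h0; exact h0.1
      · rw [hq, mem_pendT] at hl; exact hl.1
  · rw [← not_exists, mount_iff]
    rintro ⟨n, p, h3⟩
    apply hM'
    by_cases hnn : ∃ k, p k = none
    · have := h3.trans (ncard_fin_le _)
      obtain ⟨m, rfl⟩ : ∃ m, n = m + 2 := ⟨n - 2, by omega⟩
      obtain ⟨q, r, hqp, hq0, hr0, hr⟩ := pull_path p hnn
      have hq3 : 3 ≤ {k | q k ∈ pendentT T t}.ncard := by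
        rcases hqp with hqp | hqp
        · simpa only [hqp] using h3
        · refine h3.trans (Set.ncard_le_ncard_of_injOn Fin.rev ?_ Fin.rev_injective.injOn)
          intro k hk
          show q k.rev ∈ pendentT T t
          rw [hqp, Fin.rev_rev]
          exact hk
      refine ⟨m + 1, r, hq3.trans ?_⟩
      have hmem : ∀ j : Fin (m + 1), q j.succ ∈ pendentT T t → r j ∈ T ∧ j ≠ 0 := by
        intro j hj
        rw [hr, mem_pendT] at hj
        refine ⟨hj.1, ?_⟩
        rintro rfl
        exact hj.2 hr0
      refine Set.ncard_le_ncard_of_injOn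
        (Fin.cases (motive := fun _ => Fin (m + 1)) 0 (fun j => j)) ?_ ?_
      · intro k hk
        induction k using Fin.cases with
        | zero => show r 0 ∈ T; rw [hr0]; exact ht
        | succ j => exact (hmem j hk).1
      · intro a ha b hb hab
        induction a using Fin.cases with
        | zero =>
          induction b using Fin.cases with
          | zero => rfl
          | succ j => exact absurd hab.symm (hmem j hb).2
        | succ i =>
          induction b using Fin.cases with
          | zero => exact absurd hab (hmem i ha).2
          | succ j => exact congrArg Fin.succ hab
    · obtain ⟨q, hq⟩ := pull p (not_exists.mp hnn)
      refine ⟨n, q, h3.trans (Set.ncard_le_ncard ?_)⟩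
      intro k hk
      rw [Set.mem_ofPred_eq, hq, mem_pendT] at hk
      exact hk.1
end

section
/- Let (G,T) be a clean graft and let t ∈ T. Then clone((G,T),t) is a clean graft. -/
universe u

section CloneHelpers
open SimpleGraph

def NiceRim {α : Type*} (R : SimpleGraph α) : Prop :=
  (∀ i, ∃ a b, ∀ k, R.Adj i k → k = a ∨ k = b) ∧
  (∀ i j, i ≠ j → (∀ k, R.Adj i k ↔ R.Adj j k) → ∀ k, k = i ∨ k = j ∨ R.Adj i k)

theorem niceRim_path (n : ℕ) : NiceRim (pathGraph n) := by
  constructor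
  · intro i
    refine ⟨⟨(i : ℕ) - 1, by omega⟩, if h : (i : ℕ) + 1 < n then ⟨i + 1, h⟩ else i, ?_⟩
    intro k hk
    rw [pathGraph_adj] at hk
    rcases hk with hk | hk
    · right
      have : (i : ℕ) + 1 < n := by omega
      rw [dif_pos this]
      ext; simp; omega
    · left
      ext; simp; omega
  · have key : ∀ i j : Fin n, i < j → (∀ k, (pathGraph n).Adj i k ↔ (pathGraph n).Adj j k) →
        ∀ k, k = i ∨ k = j ∨ (pathGraph n).Adj i k := by
      intro i j hij h k
      simp only [pathGraph_adj] at *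
      have hij' : (i : ℕ) < j := hij
      have h1 := h ⟨(j : ℕ) - 1, by omega⟩
      have h2 := h ⟨(i : ℕ) - 1, by omega⟩
      have h3 : ¬ ((j : ℕ) + 1 < n) := by
        intro h3
        have := h ⟨(j : ℕ) + 1, h3⟩
        simp at this
        omega
      simp only [] at h1 h2
      have := k.2
      rw [Fin.ext_iff, Fin.ext_iff]
      omega
    intro i j hij h k
    rcases lt_or_gt_of_ne hij with hl | hl
    · exact key i j hl h k
    · have := key j i hl (fun k => (h k).symm) k
      rw [h k]
      tauto

theorem niceRim_cycle (m : ℕ) : NiceRim (cycleGraph (m + 4)) := by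
  have hadj : ∀ i k : Fin (m + 4), (cycleGraph (m + 4)).Adj i k ↔ k = i - 1 ∨ k = i + 1 := by
    intro i k
    rw [cycleGraph_adj]
    constructor
    · rintro (h | h)
      · left; rw [← h]; abel
      · right; rw [← h]; abel
    · rintro (h | h)
      · left; rw [h]; abel
      · right; rw [h]; abel
  constructor
  · intro i
    exact ⟨i - 1, i + 1, fun k hk => (hadj i k).1 hk⟩
  · intro i j hij h k
    simp only [hadj] at h ⊢
    have h1 : i + 1 = j - 1 := by
      rcases (h (i + 1)).1 (Or.inr rfl) with h1 | h1
      · exact h1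
      · exact absurd (add_right_cancel h1) hij
    have h2 : i - 1 = j + 1 := by
      rcases (h (i - 1)).1 (Or.inl rfl) with h1 | h1
      · exact absurd (sub_left_injective h1) hij
      · exact h1
    have h3 : (1 + 1 + (1 + 1) : Fin (m + 4)) = 0 := by
      have e1 : j = i + 1 + 1 := by rw [h1]; abel
      rw [e1] at h2
      have : i + (1 + 1 + (1 + 1)) = i := by
        calc i + (1 + 1 + (1 + 1)) = (i + 1 + 1 + 1) + 1 := by abel
          _ = i := by rw [← h2]; abel
      simpa using this
    have hm : m = 0 := by
      by_contra hm
      have := congrArg Fin.val h3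
      have h1v : ((1 : Fin (m + 4)) : ℕ) = 1 := by
        rw [Fin.val_one']; exact Nat.mod_eq_of_lt (by omega)
      simp only [Fin.val_add, h1v, Fin.val_zero] at this
      rw [Nat.mod_eq_of_lt (a := 1 + 1) (by omega), Nat.mod_eq_of_lt (by omega)] at this
      omega
    subst hm
    clear h h2 h3 hadj
    revert i j k
    decide

theorem pair_ncard {α : Type*} {S : Set α} (a b : α) (h : ∀ k ∈ S, k = a ∨ k = b)
    (h3 : 3 ≤ S.ncard) : False := by
  have h1 : S.ncard ≤ ({a, b} : Set α).ncard :=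
    Set.ncard_le_ncard (fun k hk => h k hk) (Set.toFinite _)
  have := Set.ncard_insert_le a ({b} : Set α)
  rw [Set.ncard_singleton] at this
  omega

theorem no_hub {U α : Type*} (W : SimpleGraph U) (R : SimpleGraph α) (hR : NiceRim R)
    (w : U) (e : W.induce {u | u ≠ w} ≃g R) (h3 : 3 ≤ (W.neighborSet w).ncard)
    (htri : ∀ a b c, W.Adj a b → W.Adj b c → W.Adj a c → False)
    (x y : U) (hxy : x ≠ y) (htw : ∀ z, W.Adj x z ↔ W.Adj y z) : False := by
  have nxy : ¬ W.Adj x y := fun h => W.irrefl ((htw y).1 h)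
  -- a rim vertex not adjacent to `w` has at most two neighbours
  have deg : ∀ v : U, v ≠ w → ¬ W.Adj v w → ∃ a b, ∀ k ∈ W.neighborSet v, k = a ∨ k = b := by
    intro v hv hvw
    obtain ⟨a, b, hab⟩ := hR.1 (e ⟨v, hv⟩)
    refine ⟨(e.symm a).1, (e.symm b).1, ?_⟩
    intro k hk
    have hkw : k ≠ w := by rintro rfl; exact hvw hk
    have : R.Adj (e ⟨v, hv⟩) (e ⟨k, hkw⟩) := e.map_adj_iff.2 hk
    rcases hab _ this with h | h
    · left; rw [← h]; simp
    · right; rw [← h]; simp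
  by_cases hx : x = w
  · subst hx
    obtain ⟨a, b, hab⟩ := deg y hxy.symm (fun h => nxy h.symm)
    exact pair_ncard a b (fun k hk => hab k ((htw k).1 hk)) h3
  by_cases hy : y = w
  · subst hy
    obtain ⟨a, b, hab⟩ := deg x hxy nxy
    exact pair_ncard a b (fun k hk => hab k ((htw k).2 hk)) h3
  have cov : ∀ k, k ≠ w → k = x ∨ k = y ∨ W.Adj x k := by
    intro k hk
    have := hR.2 (e ⟨x, hx⟩) (e ⟨y, hy⟩) (by simpa using hxy) (by
      intro k
      obtain ⟨k, rfl⟩ := e.surjective k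
      rw [e.map_adj_iff, e.map_adj_iff]
      exact htw k) (e ⟨k, hk⟩)
    rw [e.map_adj_iff] at this
    simpa using this
  by_cases hxw : W.Adj x w
  · refine pair_ncard x y (fun k hk => ?_) h3
    rcases cov k (fun h => W.irrefl (h ▸ hk : W.Adj w w)) with h | h | h
    · exact Or.inl h
    · exact Or.inr h
    · exact (htri x w k hxw hk h).elim
  · obtain ⟨a, b, hab⟩ := deg x hx hxw
    refine pair_ncard a b (fun k hk => ?_) h3
    rcases cov k (fun h => W.irrefl (h ▸ hk : W.Adj w w)) with h | h | h
    · subst h; exact (hxw (SimpleGraph.Adj.symm hk)).elim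
    · subst h; exact (hxw ((htw w).2 (SimpleGraph.Adj.symm hk))).elim
    · exact hab k h

/-- Transporting the deleted subgraph along an isomorphism. -/
def delIso {U U' : Type*} {W : SimpleGraph U} {W' : SimpleGraph U'} (φ : W ≃g W') (w : U) :
    W.induce {u | u ≠ w} ≃g W'.induce {u | u ≠ φ w} where
  toEquiv := φ.toEquiv.subtypeEquiv (fun a => by simp)
  map_rel_iff' := by
    intro a b
    exact φ.map_adj_iff

theorem nbr_ncard {U U' : Type*} {W : SimpleGraph U} {W' : SimpleGraph U'} (φ : W ≃g W') (w : U) :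
    (W'.neighborSet (φ w)).ncard = (W.neighborSet w).ncard := by
  rw [← Set.ncard_image_of_injective (W.neighborSet w) φ.injective]
  congr 1
  ext k
  obtain ⟨k, rfl⟩ := φ.surjective k
  simp [φ.map_adj_iff]

theorem isWheel_iso {U U' : Type u} {W : SimpleGraph U} {W' : SimpleGraph U'} (φ : W ≃g W')
    (h : IsWheel W) : IsWheel W' := by
  obtain ⟨w, n, hn, ⟨e⟩, h3⟩ := h
  exact ⟨φ w, n, hn, ⟨(delIso φ w).symm.trans e⟩, by rwa [nbr_ncard]⟩

theorem isGuardedFan_iso {U U' : Type u} {W : SimpleGraph U} {W' : SimpleGraph U'} (φ : W ≃g W')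
    {M : Set U} {M' : Set U'} (hM : ∀ u, u ∈ M → φ u ∈ M')
    (h : IsGuardedFan W M) : IsGuardedFan W' M' := by
  obtain ⟨w, n, e, h3, h1, h2⟩ := h
  exact ⟨φ w, n, (delIso φ w).symm.trans e, by rwa [nbr_ncard], hM _ h1, hM _ h2⟩

theorem isMountablePath_iso {U U' : Type u} {W : SimpleGraph U} {W' : SimpleGraph U'}
    (φ : W ≃g W') {M : Set U} {M' : Set U'} (hM : ∀ u, φ u ∈ M' ↔ u ∈ M)
    (h : IsMountablePath W M) : IsMountablePath W' M' := by
  obtain ⟨⟨n, ⟨e⟩⟩, h3⟩ := h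
  refine ⟨⟨n, ⟨φ.symm.trans e⟩⟩, ?_⟩
  have : M' = φ '' M := by
    ext k
    obtain ⟨k, rfl⟩ := φ.surjective k
    simp [hM]
  rwa [this, Set.ncard_image_of_injective _ φ.injective]

theorem cloneGraph_adj {V : Type u} (G : SimpleGraph V) (t : V) (a b : Option V) :
    (cloneGraph G t).Adj a b ↔ G.Adj (a.getD t) (b.getD t) := by
  unfold cloneGraph
  rw [SimpleGraph.fromRel_adj]
  rcases a with _ | a <;> rcases b with _ | b
  · simp
  · simp
  · simp [G.adj_comm]
  · simp only [ne_eq, Option.some.injEq, Option.getD_some]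
    constructor
    · rintro ⟨-, (⟨u, v, rfl, rfl, h⟩ | ⟨v, h, -⟩) | (⟨u, v, rfl, rfl, h⟩ | ⟨v, h, -⟩)⟩
      · exact h
      · cases h
      · exact h.symm
      · cases h
    · intro h
      exact ⟨h.ne, Or.inl (Or.inl ⟨a, b, rfl, rfl, h⟩)⟩

theorem mem_cloneT {V : Type u} {T : Set V} {t : V} (ht : t ∈ T) (a : Option V) :
    a ∈ cloneT T ↔ a.getD t ∈ T := by
  rcases a with _ | a <;> simp [cloneT, ht]

noncomputable def cloneIso {V : Type u} (G : SimpleGraph V) (t : V) (s : Set (Option V))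
    (hs : Set.InjOn (fun a : Option V => a.getD t) s) :
    (cloneGraph G t).induce s ≃g G.induce ((fun a : Option V => a.getD t) '' s) where
  toEquiv := Equiv.Set.imageOfInjOn _ s hs
  map_rel_iff' := by
    intro a b
    exact (cloneGraph_adj G t a b).symm

theorem clone_injOn {V : Type u} (t : V) (s : Set (Option V))
    (hs : ¬ (none ∈ s ∧ some t ∈ s)) : Set.InjOn (fun a : Option V => a.getD t) s := by
  intro a ha b hb hab
  rcases a with _ | a <;> rcases b with _ | b
  · rfl
  · simp only [Option.getD_none, Option.getD_some] at hab
    subst hab; exact (hs ⟨ha, hb⟩).elim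
  · simp only [Option.getD_none, Option.getD_some] at hab
    subst hab; exact (hs ⟨hb, ha⟩).elim
  · simpa using hab

end CloneHelpers

/-- **Lemma.** If `(G, T)` is a clean graft and `t ∈ T`, then `clone((G,T),t)` is clean. -/
theorem clone_isCleanGraft {V : Type u} (G : SimpleGraph V) (T : Set V)
    (h : IsCleanGraft G T) (t : V) (ht : t ∈ T) :
    IsCleanGraft (cloneGraph G t) (cloneT T) := by
  classical
  obtain ⟨h1, h2, h3, h4, h5⟩ := h
  have htri : ∀ a b c, (cloneGraph G t).Adj a b → (cloneGraph G t).Adj b c →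
      (cloneGraph G t).Adj a c → False := by
    intro a b c hab hbc hac
    rw [cloneGraph_adj] at hab hbc hac
    exact h1 _ (SimpleGraph.is3Clique_triple_iff.2 ⟨hab, hac, hbc⟩)
  have hst : ∀ u ∈ cloneT T, ∀ v ∈ cloneT T, ¬ (cloneGraph G t).Adj u v := by
    intro u hu v hv
    rw [mem_cloneT ht] at hu hv
    rw [cloneGraph_adj]
    exact h2 _ hu _ hv
  have htw : ∀ z, (cloneGraph G t).Adj none z ↔ (cloneGraph G t).Adj (some t) z := by
    intro z
    rw [cloneGraph_adj, cloneGraph_adj]; rfl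
  refine ⟨?_, hst, ?_, ?_, ?_⟩
  · intro S hS
    obtain ⟨a, b, c, hab, hac, hbc, -⟩ := SimpleGraph.is3Clique_iff.1 hS
    exact htri a b c hab hbc hac
  · intro s hW
    by_cases hs : none ∈ s ∧ some t ∈ s
    · obtain ⟨w, n, hn, ⟨e⟩, hw⟩ := hW
      obtain ⟨m, rfl⟩ := Nat.exists_eq_add_of_le' hn
      exact no_hub _ _ (niceRim_cycle m) w e hw (fun a b c => htri a b c)
        ⟨none, hs.1⟩ ⟨some t, hs.2⟩ (by simp) (fun z => htw z)
    · exact h3 _ (isWheel_iso (cloneIso G t s (clone_injOn t s hs)) hW)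
  · intro s hW
    by_cases hs : none ∈ s ∧ some t ∈ s
    · obtain ⟨w, n, e, hw, -, -⟩ := hW
      exact no_hub _ _ (niceRim_path _) w e hw (fun a b c => htri a b c)
        ⟨none, hs.1⟩ ⟨some t, hs.2⟩ (by simp) (fun z => htw z)
    · exact h4 _ (isGuardedFan_iso (cloneIso G t s (clone_injOn t s hs))
        (fun u hu => (mem_cloneT ht _).1 hu) hW)
  · intro s hW
    by_cases hs : none ∈ s ∧ some t ∈ s
    · obtain ⟨⟨n, ⟨e⟩⟩, hM⟩ := hW
      refine pair_ncard (⟨none, hs.1⟩ : s) ⟨some t, hs.2⟩ (fun k hk => ?_) hM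
      have := (niceRim_path n).2 (e ⟨none, hs.1⟩) (e ⟨some t, hs.2⟩) (by simp) (by
        intro k
        obtain ⟨k, rfl⟩ := e.surjective k
        rw [e.map_adj_iff, e.map_adj_iff]
        exact htw k) (e k)
      rw [e.map_adj_iff, e.injective.eq_iff, e.injective.eq_iff] at this
      rcases this with h | h | h
      · exact Or.inl h
      · exact Or.inr h
      · exact (hst _ (Set.mem_insert _ _) _ hk h).elim
    · exact h5 _ (isMountablePath_iso (cloneIso G t s (clone_injOn t s hs))
        (fun u => (mem_cloneT ht _).symm) hW)
end
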